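/- Let (W,S) be a Coxeter system of finite rank with Coxeter matrix m, let B be a base of (W,S) of type C_{2q+1} for some q ≥ 1, and let a,b,c be the elements of B such that m(a,b) = 4 and m(b,c) = 3. Suppose that m(s,t) = 2 for all (s,t) ∈ (S−B)×B such that m(s,a) < ∞. Let d = aba, let z be the longest element of ⟨B⟩, let S' = (S−{a}) ∪ {d,z}, and let B' = (B−{a}) ∪ {d}. Then S' is a set of Coxeter generators for W such that: (1) B' is a base of (W,S') of type B_{2q+1} that matches B; (2) m(z,t) = 2 for all t ∈ B'; (3) for (s,t) ∈ (S−B)×{d,z}, one has m(s,t) < ∞ if and only if m(s,a) < ∞, and if m(s,t) < ∞ then m(s,t) = 2 (here m denotes the Coxeter matrix of (W,S')). -/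

import Mathlib

/-!
List the base as `a, g 0, …, g (2q - 1)`, starting at the end of the diagram which carries the label
`4`, so that `b = g 0`, and let `d = aba`. In the group of signed permutations of `2q + 1` coordinates,
the chain `g` is made of the transpositions of consecutive coordinates and `a` changes the sign of
coordinate `0`; the chain together with `d` generates the subgroup of type `D`. For each `k < 2q` the
elements `g` and `d` give a word changing the signs of the coordinates `0` and `k + 1`, and the product
`u` of these `2q` words changes the signs of all coordinates but `0`. Hence `a u` is `-1`. Everything
about `u` is derived from the relations of type `D` alone (`DRelations`): `u` is an involution, commutes
with `g j` for `j ≥ 1` and exchanges `b` and `d`. So the same computation applies in `W` and in an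
abstractly presented group.

The central involution `a u` is the longest element `z` of `⟨B⟩` (`Setup.longest_eq_center`). It is
nontrivial because the character of `W` with value `-1` at `a` and `1` at the other generators does not
kill it. To compare it with the longest element, the inversions of an element of `W` are encoded by a
cocycle with values in `ZMod 2`, for which the strong exchange condition holds. The inversions of a
central element are closed under conjugation, which together with the dihedral group `⟨a, b⟩` forces all
of `B` or nothing in `B` to be an inversion (`longest_eq_of_central`).

For the new system, the Coxeter matrix `Setup.matrix` is indexed by `Option S`, where `some a` stands
for `d` and `none` for `z`. A generator outside `B` which is related to `a` commutes with `⟨B⟩`, so `d`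
and `z` satisfy the relations prescribed by the new matrix, which gives a homomorphism from the abstract
Coxeter group to `W`. Since `z = a u` and `u` is a word in the new generators, `a = z u` can be recovered
in the abstract group, where it satisfies the old relations. The two homomorphisms are inverse to each
other (`Setup.newSystem`).

That `B' = (B \ {a}) ∪ {d}` is a base is read off from the new matrix. A larger irreducible set of
generators contains an edge leaving `B'`. Such an edge leads to a generator without relation to `a`,
hence without relation to `d ∈ B'`; the subgroup generated is infinite by the geometric representation, which also shows that generators are distinct and that
labels `≥ 3` prevent commutation. Finally `⟨B⟩ = ⟨B'⟩ ∪ z⟨B'⟩` with `z` central, so both groups have the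
same commutator subgroup.
-/


variable {W : Type*} [Group W]

/-- `S` is a set of Coxeter generators of the group `W`, with Coxeter matrix given by the
restriction of `m` to `S × S` (the value `0` of `m` encodes `∞`). -/
def IsCoxeterSystemOn (m : W → W → ℕ) (S : Set W) : Prop :=
  ∃ (cm : CoxeterMatrix S) (cs : CoxeterSystem cm W),
    (∀ s : S, cs.simple s = (s : W)) ∧ ∀ s t : S, cm.M s t = m s t

/-- The subset `B` is irreducible: its Coxeter diagram (edges between distinct `x, y` with
`m x y > 2`, including `m x y = ∞`, i.e. `m x y = 0`) is nonempty and connected. -/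
def IsIrreducibleOn (m : W → W → ℕ) (B : Set W) : Prop :=
  B.Nonempty ∧ ∀ u ∈ B, ∀ v ∈ B,
    Relation.ReflTransGen
      (fun x y => x ∈ B ∧ y ∈ B ∧ x ≠ y ∧ (m x y = 0 ∨ 2 < m x y)) u v

/-- `B` is a base of the Coxeter system `(W, S)`: the visual subgroup `⟨B⟩` is a noncyclic,
maximal, finite, irreducible visual subgroup. -/
def IsBase (m : W → W → ℕ) (S B : Set W) : Prop :=
  B ⊆ S ∧ IsIrreducibleOn m B ∧ (Subgroup.closure B : Set W).Finite ∧
    ¬ IsCyclic ↥(Subgroup.closure B) ∧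
    ∀ B' : Set W, B' ⊆ S → B ⊆ B' → IsIrreducibleOn m B' →
      (Subgroup.closure B' : Set W).Finite → B' = B

/-- The base `B` matches the base `B'`: the commutator subgroups of the visual subgroups
`⟨B⟩` and `⟨B'⟩` are conjugate in `W`. -/
def Matches (B B' : Set W) : Prop :=
  ∃ w : W,
    Subgroup.map ((MulAut.conj w).toMonoidHom)
        (⁅Subgroup.closure B, Subgroup.closure B⁆ : Subgroup W)
      = ⁅Subgroup.closure B', Subgroup.closure B'⁆

/-- `(⟨B⟩, B)` has the isomorphism type of the Coxeter system of the Coxeter matrix `std`. -/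
def HasType (m : W → W → ℕ) (B : Set W) {n : ℕ} (std : Fin n → Fin n → ℕ) : Prop :=
  ∃ e : ↥B ≃ Fin n, ∀ u v : ↥B, m u v = std (e u) (e v)

/-- The Coxeter matrix of type `Aₙ` (Coxeter's notation): linear diagram, all labels 3. -/
def aMat (n : ℕ) : Fin n → Fin n → ℕ := fun i j =>
  if i = j then 1 else if i.val + 1 = j.val ∨ j.val + 1 = i.val then 3 else 2

/-- The Coxeter matrix of type `Cₙ` in Coxeter's notation (Bourbaki's `Bₙ`):
linear diagram with labels 3, …, 3, 4. -/
def cMat (n : ℕ) : Fin n → Fin n → ℕ := fun i j =>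
  if i = j then 1
  else if i.val + 1 = j.val ∨ j.val + 1 = i.val then
    (if i.val + 1 = n ∨ j.val + 1 = n then 4 else 3)
  else 2

/-- The Coxeter matrix of type `Bₙ` in Coxeter's notation (Bourbaki's `Dₙ`), for `n ≥ 3`:
a chain `0, …, n-2` with labels 3 together with the edge `{n-3, n-1}` labelled 3. -/
def bMat (n : ℕ) : Fin n → Fin n → ℕ := fun i j =>
  if i = j then 1
  else if ((i.val + 1 = j.val ∧ j.val + 2 ≤ n) ∨ (j.val + 1 = i.val ∧ i.val + 2 ≤ n))
      ∨ (i.val + 3 = n ∧ j.val + 1 = n) ∨ (j.val + 3 = n ∧ i.val + 1 = n) then 3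
  else 2

/-- The dihedral Coxeter matrix `D₂(k)` (i.e. `I₂(k)`). -/
def d2Mat (k : ℕ) : Fin 2 → Fin 2 → ℕ := fun i j => if i = j then 1 else k

/-- The Coxeter matrix of type `G₃` in Coxeter's notation (i.e. `H₃`). -/
def g3Mat : Fin 3 → Fin 3 → ℕ := ![![1,3,2], ![3,1,5], ![2,5,1]]

/-- The Coxeter matrix of type `G₄` in Coxeter's notation (i.e. `H₄`). -/
def g4Mat : Fin 4 → Fin 4 → ℕ := ![![1,3,2,2], ![3,1,3,2], ![2,3,1,5], ![2,2,5,1]]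

/-- The Coxeter matrix of type `F₄`. -/
def f4Mat : Fin 4 → Fin 4 → ℕ := ![![1,3,2,2], ![3,1,4,2], ![2,4,1,3], ![2,2,3,1]]

/-- The 2-part of `k`: the largest power of 2 dividing `k` (with `0` encoding `∞`;
the 2-part of `∞` is `∞`). -/
def twoPart (k : ℕ) : ℕ := if k = 0 then 0 else 2 ^ (k.factorization 2)

/-- The subgroup `N_b`: the normal closure in `W` of the elements `(st) ^ b(s,t)` for
`s, t ∈ S` with `m s t < ∞`, where `b(s,t)` is the 2-part of `m s t`. -/
def NbSubgroup (m : W → W → ℕ) (S : Set W) : Subgroup W :=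
  Subgroup.normalClosure
    {x | ∃ s ∈ S, ∃ t ∈ S, m s t ≠ 0 ∧ x = (s * t) ^ twoPart (m s t)}

instance (m : W → W → ℕ) (S : Set W) : (NbSubgroup m S).Normal :=
  Subgroup.normalClosure_normal

/-- `(a, b)` is a special pair of elements of `S`: `m a b ≡ 2 mod 4` and either `v = a` or
`v = b` has the property that `m s a = m s b = 2` for every `s ∈ S \ {a, b}` with
`m s v < ∞`. -/
def IsSpecialPair (m : W → W → ℕ) (S : Set W) (a b : W) : Prop :=
  a ∈ S ∧ b ∈ S ∧ a ≠ b ∧ m a b % 4 = 2 ∧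
    ((∀ s ∈ S, s ≠ a → s ≠ b → m s a ≠ 0 → m s a = 2 ∧ m s b = 2) ∨
     (∀ s ∈ S, s ≠ a → s ≠ b → m s b ≠ 0 → m s a = 2 ∧ m s b = 2))

open scoped Classical in
/-- `m̄ a b = 2` if `(a, b)` is a special pair and `m̄ a b = m a b` otherwise. -/
noncomputable def mbar (m : W → W → ℕ) (S : Set W) (a b : W) : ℕ :=
  if IsSpecialPair m S a b then 2 else m a b

/-- The subgroup `N_e`: the normal closure in `W` of the elements `st` with `m s t` odd
together with the elements `(ab)²` with `(a, b)` a special pair. -/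
def NeSubgroup (m : W → W → ℕ) (S : Set W) : Subgroup W :=
  Subgroup.normalClosure
    ({x | ∃ s ∈ S, ∃ t ∈ S, Odd (m s t) ∧ x = s * t} ∪
     {x | ∃ a b : W, IsSpecialPair m S a b ∧ x = (a * b) ^ 2})

instance (m : W → W → ℕ) (S : Set W) : (NeSubgroup m S).Normal :=
  Subgroup.normalClosure_normal

/-- The word length of `w` with respect to the generating set `B`. -/
noncomputable def wordLength (B : Set W) (w : W) : ℕ :=
  sInf {n | ∃ l : List W, (∀ x ∈ l, x ∈ B) ∧ l.length = n ∧ l.prod = w}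

/-- `z` is a longest element of the visual subgroup `⟨B⟩`. -/
def IsLongestElement (B : Set W) (z : W) : Prop :=
  z ∈ Subgroup.closure B ∧
    ∀ w ∈ Subgroup.closure B, wordLength B w ≤ wordLength B z

/-- The basic subgroup `⟨B⟩` of `(W, S)` is reduced: for every set of Coxeter generators `S'`
of `W`, any base of `(W, S')` matching `B` generates a subgroup of order at least `|⟨B⟩|`. -/
def IsReducedBase (m : W → W → ℕ) (S B : Set W) : Prop :=
  ∀ (S' : Set W) (m' : W → W → ℕ) (B' : Set W),
    IsCoxeterSystemOn m' S' → S'.Finite → IsBase m' S' B' → Matches B B' →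
      Nat.card ↥(Subgroup.closure B) ≤ Nat.card ↥(Subgroup.closure B')

/-- The isomorphism type of `(⟨B⟩, B)` belongs to the family `F` of isomorphism types of
Coxeter systems (a family of Coxeter matrices). -/
def TypeIn (F : ∀ n : ℕ, (Fin n → Fin n → ℕ) → Prop) (m : W → W → ℕ) (B : Set W) : Prop :=
  ∃ (n : ℕ) (Mt : Fin n → Fin n → ℕ), F n Mt ∧ HasType m B Mt

/-- The subgroup `N(F)`: the normal closure in `W` of the commutator subgroups of all
reduced basic subgroups of `(W, S)` of type in `F` together with the commutator subgroups of
all unreduced basic subgroups of `(W, S)` matching a reduced basic subgroup of type in `F`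
of another system `(W, S')`. -/
def NFSubgroup (F : ∀ n : ℕ, (Fin n → Fin n → ℕ) → Prop)
    (m : W → W → ℕ) (S : Set W) : Subgroup W :=
  Subgroup.normalClosure
    {x | ∃ B : Set W, IsBase m S B ∧
      x ∈ (⁅Subgroup.closure B, Subgroup.closure B⁆ : Subgroup W) ∧
      ((IsReducedBase m S B ∧ TypeIn F m B) ∨
       (¬ IsReducedBase m S B ∧ ∃ (S' : Set W) (m' : W → W → ℕ) (B' : Set W),
          IsCoxeterSystemOn m' S' ∧ S'.Finite ∧ IsBase m' S' B' ∧
          IsReducedBase m' S' B' ∧ TypeIn F m' B' ∧ Matches B B'))}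

instance (F : ∀ n : ℕ, (Fin n → Fin n → ℕ) → Prop) (m : W → W → ℕ) (S : Set W) :
    (NFSubgroup F m S).Normal :=
  Subgroup.normalClosure_normal

/-- The normal closure, within the subgroup `H`, of the subset `X ⊆ H`,
as a subgroup of the ambient group. -/
def nClosIn (H : Subgroup W) (X : Set W) : Subgroup W :=
  Subgroup.map H.subtype (Subgroup.normalClosure ((fun x : H => (x : W)) ⁻¹' X))

/-- The generating set for the subgroup `N(⟨B⟩)` of a basic subgroup `⟨B⟩` of rank at least 3:
the commutator subgroup of `⟨B⟩` if the rank is at least 5 or the type is `A₄`, `G₃` or `G₄`;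
`a₁a₃` for type `A₃`; `b₁b₂, b₂b₃` (products of distinct commuting generators) for type `B₄`;
`(c₂c₃)²` for type `C₃`; `c₁c₃` for type `C₄`; and `(f₂f₃)²` for type `F₄`. -/
def genSetNB (m : W → W → ℕ) (B : Set W) : Set W :=
  {x | ((5 ≤ B.ncard ∨ HasType m B (aMat 4) ∨ HasType m B g3Mat ∨ HasType m B g4Mat) ∧
          x ∈ (⁅Subgroup.closure B, Subgroup.closure B⁆ : Subgroup W)) ∨
       (HasType m B (aMat 3) ∧ ∃ u ∈ B, ∃ v ∈ B, u ≠ v ∧ m u v = 2 ∧ x = u * v) ∨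
       (HasType m B (bMat 4) ∧ ∃ u ∈ B, ∃ v ∈ B, u ≠ v ∧ m u v = 2 ∧ x = u * v) ∨
       (HasType m B (cMat 3) ∧ ∃ u ∈ B, ∃ v ∈ B, m u v = 4 ∧ x = (u * v) ^ 2) ∨
       (HasType m B (cMat 4) ∧ ∃ u ∈ B, ∃ p ∈ B, ∃ v ∈ B, ∃ q ∈ B,
          m u p = 3 ∧ m p v = 3 ∧ m v q = 4 ∧ m u v = 2 ∧ x = u * v) ∨
       (HasType m B f4Mat ∧ ∃ u ∈ B, ∃ v ∈ B, m u v = 4 ∧ x = (u * v) ^ 2)}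

/-- The subgroup `N(⟨B⟩)` of the visual subgroup `⟨B⟩`, viewed as a subgroup of `W`. -/
def NBSubgroup (m : W → W → ℕ) (B : Set W) : Subgroup W :=
  nClosIn (Subgroup.closure B) (genSetNB m B)

/-- The subgroup `N(W)`: the normal closure in `W` of the subgroups `N(⟨B⟩)` over all
bases `B` of `(W, S)` of rank greater than 2. -/
def NWSubgroup (m : W → W → ℕ) (S : Set W) : Subgroup W :=
  Subgroup.normalClosure
    {x | ∃ B : Set W, IsBase m S B ∧ 2 < B.ncard ∧ x ∈ NBSubgroup m B}

instance (m : W → W → ℕ) (S : Set W) : (NWSubgroup m S).Normal :=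
  Subgroup.normalClosure_normal



/-! ### The geometric representation of a Coxeter system -/

namespace COdd

section Geometric

open Module Real

variable {I : Type*}

/-- The linear form `x ↦ 2 B(αᵢ, x)` on the free real vector space with basis `(αⱼ)`, where
`B(αᵢ, αⱼ) = -cos (π / M i j)`. For `M i j = 0` (no relation), the convention `π / 0 = 0` gives the
correct value `B(αᵢ, αⱼ) = -1`. -/
noncomputable def corootForm (M : CoxeterMatrix I) (i : I) : Dual ℝ (I →₀ ℝ) :=
  Finsupp.linearCombination ℝ (fun j => -2 * cos (π / M i j))

lemma corootForm_single (M : CoxeterMatrix I) (i j : I) :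
    corootForm M i (Finsupp.single j 1) = -2 * cos (π / M i j) := by
  simp [corootForm]

lemma corootForm_self (M : CoxeterMatrix I) (i : I) :
    corootForm M i (Finsupp.single i 1) = 2 := by
  simp [corootForm_single]

/-- The product of two reflections whose roots make the angle `π - π / m` has order dividing `m`. -/
lemma reflection_mul_reflection_pow_eq_one {V : Type*} [AddCommGroup V] [Module ℝ V]
    {x y : V} {f g : Dual ℝ V} (hf : f x = 2) (hg : g y = 2) (m : ℕ) (hm : 2 ≤ m)
    (hfy : f y = -2 * cos (π / m)) (hgx : g x = -2 * cos (π / m)) :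
    (reflection hf * reflection hg) ^ m = 1 := by
  rcases hm.eq_or_lt with rfl | hm3
  · have h0 : f y = 0 := by rw [hfy]; simp
    have h1 : g x = 0 := by rw [hgx]; simp
    ext z
    simp only [pow_two, LinearEquiv.mul_apply, reflection_apply, map_sub, map_smul, h0, h1, hf, hg,
      LinearEquiv.coe_one, id_eq]
    module
  · set θ : ℝ := 2 * π / m with hθ
    have hm0 : (0 : ℝ) < m := by positivity
    have hm3' : (3 : ℝ) ≤ m := by exact_mod_cast hm3
    have hmθ : m * θ = 2 * π := by rw [hθ]; field_simp
    have hsin : sin θ ≠ 0 := by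
      apply ne_of_gt
      apply sin_pos_of_pos_of_lt_pi
      · rw [hθ]; positivity
      · rw [hθ, div_lt_iff₀ hm0]; nlinarith [pi_pos]
    have ht : 2 * cos θ = f y * g x - 2 := by
      rw [hfy, hgx, show θ = 2 * (π / m) by rw [hθ]; ring, cos_two_mul]; ring
    have hS (k : ℤ) : (Polynomial.Chebyshev.S ℝ k).eval (2 * cos θ)
        = sin ((k + 1) * θ) / sin θ := by
      rw [eq_div_iff hsin]; exact_mod_cast Polynomial.Chebyshev.S_two_mul_real_cos θ k
    have key : ((reflection hf * reflection hg) ^ m).toLinearMap = LinearMap.id := by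
      rw [reflection_mul_reflection_pow hf hg m (2 * cos θ) ht]
      rcases Nat.even_or_odd' m with ⟨k, hk | hk⟩
      · have e1 : ((m : ℤ) - 2) / 2 = k - 1 := by omega
        have e2 : ((m : ℤ) - 1) / 2 = k - 1 := by omega
        have hkθ : (k : ℝ) * θ = π := by
          have : (m : ℝ) = 2 * k := by exact_mod_cast hk
          rw [this] at hmθ; linarith
        have h0 : (Polynomial.Chebyshev.S ℝ ((k : ℤ) - 1)).eval (2 * cos θ) = 0 := by
          rw [hS]; push_cast; rw [sub_add_cancel, hkθ]; simp
        rw [e1, e2, h0]; simp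
      · have e1 : ((m : ℤ) - 2) / 2 = k - 1 := by omega
        have e2 : ((m : ℤ) - 1) / 2 = k := by omega
        have e3 : ((m : ℤ) - 3) / 2 = k - 1 := by omega
        have e4 : (m : ℤ) / 2 = k := by omega
        have h0 : (Polynomial.Chebyshev.S ℝ (k : ℤ)).eval (2 * cos θ)
            + (Polynomial.Chebyshev.S ℝ ((k : ℤ) - 1)).eval (2 * cos θ) = 0 := by
          have : ((k : ℝ) + 1) * θ = 2 * π - k * θ := by
            have : (m : ℝ) = 2 * k + 1 := by exact_mod_cast hk
            rw [this] at hmθ; linarith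
          rw [hS, hS]; push_cast; rw [sub_add_cancel, this, sin_two_pi_sub]; ring
        rw [e1, e2, e3, e4, h0]; simp
    ext z
    exact congrArg (fun L => L z) key

lemma reflections_isLiftable (M : CoxeterMatrix I) :
    M.IsLiftable (fun i => reflection (corootForm_self M i)) := by
  intro i j
  by_cases hij : i = j
  · subst hij
    rw [M.diagonal, pow_one]
    exact LinearEquiv.ext (involutive_reflection (corootForm_self M i))
  · rcases Nat.eq_zero_or_pos (M i j) with h | h
    · rw [h, pow_zero]
    · have h1 := M.off_diagonal i j hij
      apply reflection_mul_reflection_pow_eq_one _ _ _ (by omega)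
      · exact corootForm_single M i j
      · rw [corootForm_single, M.symmetric]

/-- The geometric representation of a Coxeter system. -/
noncomputable def geomRep {M : CoxeterMatrix I} (cs : CoxeterSystem M W) :
    W →* ((I →₀ ℝ) ≃ₗ[ℝ] (I →₀ ℝ)) :=
  cs.lift ⟨_, reflections_isLiftable M⟩

lemma geomRep_simple {M : CoxeterMatrix I} (cs : CoxeterSystem M W) (i : I) :
    geomRep cs (cs.simple i) = reflection (corootForm_self M i) :=
  cs.lift_apply_simple (reflections_isLiftable M) i

/-- Distinct generators are distinguished by their reflections in the geometric representation. -/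
theorem simple_injective {M : CoxeterMatrix I} (cs : CoxeterSystem M W) :
    Function.Injective cs.simple := by
  intro i j h
  by_contra hij
  have h1 := congrArg (geomRep cs) h
  rw [geomRep_simple, geomRep_simple] at h1
  have h2 := congrArg (fun L => (L (Finsupp.single i 1)) i) h1
  have h3 : (Finsupp.single j (1 : ℝ)) i = 0 := Finsupp.single_eq_of_ne hij
  simp only [reflection_apply, corootForm_self, Finsupp.sub_apply, Finsupp.smul_apply, h3,
    Finsupp.single_eq_same, smul_eq_mul] at h2
  norm_num at h2

theorem simple_mul_simple_pow_ne_one {M : CoxeterMatrix I} (cs : CoxeterSystem M W) {i j : I}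
    (h : M i j = 0) (k : ℕ) (hk : k ≠ 0) : (cs.simple i * cs.simple j) ^ k ≠ 1 := by
  intro hone
  have hij : i ≠ j := by
    rintro rfl
    simp at h
  have h1 := congrArg (geomRep cs) hone
  rw [map_pow, map_mul, geomRep_simple, geomRep_simple, map_one] at h1
  have h2 := congrArg (fun L => (L (Finsupp.single i 1)) i) h1
  have h3 : (Finsupp.single j (1 : ℝ)) i = 0 := Finsupp.single_eq_of_ne hij
  have ht : (2 : ℝ) = corootForm M i (Finsupp.single j 1) * corootForm M j (Finsupp.single i 1)
      - 2 := by
    rw [corootForm_single, corootForm_single, M.symmetric j i, h]; norm_num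
  simp only [reflection_mul_reflection_pow_apply_self _ _ k 2 ht, Finsupp.add_apply,
    Finsupp.smul_apply, h3, Finsupp.single_eq_same, smul_eq_mul, LinearEquiv.coe_one, id_eq,
    Polynomial.Chebyshev.S_eval_two] at h2
  push_cast at h2
  have : (k : ℝ) = 0 := by linarith
  exact hk (by exact_mod_cast this)

/-- Two generators with `M i j ≥ 3` do not commute: apply both products to the root `αᵢ` and compare
the coefficients of `αⱼ`. -/
theorem simple_mul_simple_ne {M : CoxeterMatrix I} (cs : CoxeterSystem M W) {i j : I}
    (h : 3 ≤ M i j) : cs.simple i * cs.simple j ≠ cs.simple j * cs.simple i := by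
  intro heq
  have hij : i ≠ j := by
    rintro rfl
    simp at h
  have h1 := congrArg (geomRep cs) heq
  rw [map_mul, map_mul, geomRep_simple, geomRep_simple] at h1
  have h2 := congrArg (fun L => (L (Finsupp.single i 1)) j) h1
  have h3 : (Finsupp.single i (1 : ℝ)) j = 0 := Finsupp.single_eq_of_ne hij.symm
  simp only [LinearEquiv.mul_apply, reflection_apply, map_sub, map_smul, corootForm_self,
    Finsupp.sub_apply, Finsupp.smul_apply, h3,
    Finsupp.single_eq_same, smul_eq_mul, corootForm_single] at h2
  have h4 : (3 : ℝ) ≤ M i j := by exact_mod_cast h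
  have h5 : 0 < cos (π / M i j) := by
    apply cos_pos_of_mem_Ioo
    constructor
    · have : 0 < π / M i j := by positivity
      linarith [pi_pos]
    · rw [div_lt_iff₀ (by linarith)]
      nlinarith [pi_pos]
  rw [M.symmetric j i] at h2
  linarith

/-- A subgroup containing two generators without a relation between them is infinite. -/
theorem infinite_of_matrix_eq_zero {M : CoxeterMatrix I} (cs : CoxeterSystem M W) {i j : I}
    (h : M i j = 0) (H : Subgroup W) (hi : cs.simple i ∈ H) (hj : cs.simple j ∈ H) :
    ¬ (H : Set W).Finite := by
  intro hfin
  have : Finite H := hfin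
  obtain ⟨k, hk, hk1⟩ := isOfFinOrder_iff_pow_eq_one.mp
    (isOfFinOrder_of_finite (⟨_, H.mul_mem hi hj⟩ : H))
  exact simple_mul_simple_pow_ne_one cs h k hk.ne' (by simpa using congrArg Subtype.val hk1)

end Geometric

end COdd
/-! ### The inversion cocycle and the exchange condition -/

namespace COdd

section Cocycle

variable {I : Type*} {M : CoxeterMatrix I} (cs : CoxeterSystem M W)

lemma mul_self_simple_conj (i : I) (t : W) :
    cs.simple i * t * cs.simple i = cs.simple i ↔ t = cs.simple i := by
  constructor
  · intro h
    have h1 : cs.simple i * (cs.simple i * t * cs.simple i) * cs.simple i = cs.simple i := by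
      rw [h]; simp
    simpa [mul_assoc] using h1
  · rintro rfl
    simp

open scoped Classical in
/-- The permutation `(t, ε) ↦ (s t s, ε + [t = s])` of `W × ZMod 2` attached to the simple
reflection `s`. -/
noncomputable def inversionPerm (i : I) : Equiv.Perm (W × ZMod 2) :=
  Function.Involutive.toPerm
    (fun p => (cs.simple i * p.1 * cs.simple i, p.2 + if p.1 = cs.simple i then 1 else 0)) (by
      rintro ⟨t, ε⟩
      ext
      · simp [mul_assoc]
      · simp only [mul_self_simple_conj]
        split_ifs
        · rw [add_assoc, show (1 : ZMod 2) + 1 = 0 from rfl, add_zero]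
        · simp)

open scoped Classical in
lemma inversionPerm_apply (i : I) (t : W) (ε : ZMod 2) :
    inversionPerm cs i (t, ε) =
      (cs.simple i * t * cs.simple i, ε + if t = cs.simple i then 1 else 0) := rfl

open scoped Classical in
lemma inversionPerm_mul_pow_apply (i j : I) (k : ℕ) (t : W) (ε : ZMod 2) :
    ((inversionPerm cs i * inversionPerm cs j) ^ k) (t, ε) =
      ((cs.simple i * cs.simple j) ^ k * t * ((cs.simple i * cs.simple j) ^ k)⁻¹,
        ε + ∑ l ∈ Finset.range (2 * k),
          if t = ((cs.simple i * cs.simple j)⁻¹) ^ l * cs.simple j then 1 else 0) := by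
  induction k with
  | zero => simp
  | succ k ih =>
    set r := cs.simple i * cs.simple j with hr
    have hflip : ∀ n : ℕ, cs.simple j * r ^ n = (r⁻¹) ^ n * cs.simple j := by
      intro n
      have h1 : SemiconjBy (cs.simple j) r r⁻¹ := by
        simp [SemiconjBy, hr, mul_assoc]
      exact h1.pow_right n
    rw [pow_succ', Equiv.Perm.mul_apply, ih, Equiv.Perm.mul_apply, inversionPerm_apply,
      inversionPerm_apply, show 2 * (k + 1) = 2 * k + 1 + 1 by ring, Finset.sum_range_succ,
      Finset.sum_range_succ]
    have c1 : r ^ k * t * (r ^ k)⁻¹ = cs.simple j ↔ t = (r⁻¹) ^ (2 * k) * cs.simple j := by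
      rw [mul_inv_eq_iff_eq_mul, ← eq_inv_mul_iff_mul_eq, hflip, two_mul, pow_add, mul_assoc,
        inv_pow]
    have c2 : cs.simple j * (r ^ k * t * (r ^ k)⁻¹) * cs.simple j = cs.simple i ↔
        t = (r⁻¹) ^ (2 * k + 1) * cs.simple j := by
      have h2 : (r⁻¹) ^ (2 * k + 1) * cs.simple j
          = (r ^ k)⁻¹ * (cs.simple j * cs.simple i * cs.simple j) * r ^ k := by
        have h3 : cs.simple j * cs.simple i * cs.simple j = r⁻¹ * cs.simple j := by simp [hr]
        rw [h3, mul_assoc, mul_assoc r⁻¹, hflip, ← inv_pow, show 2 * k + 1 = k + (1 + k) by ring,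
          pow_add, pow_add, pow_one, mul_assoc, mul_assoc]
      rw [h2]
      constructor
      · intro h
        rw [← h]
        simp only [mul_assoc, inv_mul_cancel, mul_one, inv_mul_cancel_left,
          CoxeterSystem.simple_mul_simple_cancel_left, cs.simple_mul_simple_cancel_right]
      · intro h
        rw [h]
        simp only [mul_assoc, mul_inv_cancel, mul_one, mul_inv_cancel_left,
          CoxeterSystem.simple_mul_simple_cancel_left, cs.simple_mul_simple_cancel_right]
    ext
    · simp [pow_succ', hr, mul_assoc]
    · simp only [c1, c2, add_assoc]

lemma inversionPerm_isLiftable : M.IsLiftable (inversionPerm cs) := by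
  classical
  intro i j
  ext1 ⟨t, ε⟩
  rw [inversionPerm_mul_pow_apply, two_mul, Finset.sum_range_add]
  have h : ∀ l, ((cs.simple i * cs.simple j)⁻¹) ^ (M i j + l)
      = ((cs.simple i * cs.simple j)⁻¹) ^ l := by
    intro l
    rw [pow_add, inv_pow, cs.simple_mul_simple_pow, inv_one, one_mul]
  simp only [h, cs.simple_mul_simple_pow]
  ext
  · simp
  · simp only [CharTwo.add_self_eq_zero, add_zero, Equiv.Perm.coe_one, id_eq]

/-- The action of `W` on `W × ZMod 2` in which a simple reflection acts by `inversionPerm`. -/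
noncomputable def inversionHom : W →* Equiv.Perm (W × ZMod 2) :=
  cs.lift ⟨_, inversionPerm_isLiftable cs⟩

lemma inversionHom_simple (i : I) : inversionHom cs (cs.simple i) = inversionPerm cs i :=
  cs.lift_apply_simple (inversionPerm_isLiftable cs) i

/-- The inversion cocycle: `cocycle cs w t = 1` exactly when the reflection `t` occurs an odd number of
times in the right inversion sequence of a word for `w`. -/
noncomputable def cocycle (w t : W) : ZMod 2 := (inversionHom cs w (t, 0)).2

lemma inversionHom_apply (w t : W) (ε : ZMod 2) :
    inversionHom cs w (t, ε) = (w * t * w⁻¹, ε + cocycle cs w t) := by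
  unfold cocycle
  induction w using cs.simple_induction_left generalizing t ε with
  | one => simp
  | mul_simple_left w i ih =>
    rw [map_mul, Equiv.Perm.mul_apply, Equiv.Perm.mul_apply, ih t ε, ih t 0, inversionHom_simple,
      inversionPerm_apply, inversionPerm_apply]
    ext
    · simp [mul_assoc]
    · simp [add_assoc]

lemma cocycle_mul (g h t : W) : cocycle cs (g * h) t = cocycle cs h t + cocycle cs g (h * t * h⁻¹) := by
  have := congrArg Prod.snd (inversionHom_apply cs (g * h) t 0)
  rw [map_mul, Equiv.Perm.mul_apply, inversionHom_apply, inversionHom_apply] at this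
  simpa using this.symm

open scoped Classical in
lemma cocycle_simple (i : I) (t : W) : cocycle cs (cs.simple i) t = if t = cs.simple i then 1 else 0 := by
  unfold cocycle
  rw [inversionHom_simple, inversionPerm_apply]; simp

@[simp] lemma cocycle_one (t : W) : cocycle cs 1 t = 0 := by simp [cocycle]

/-- The strong exchange condition. -/
lemma exchange (l : List W) (hl : ∀ x ∈ l, ∃ i, x = cs.simple i) (t : W)
    (h : cocycle cs l.prod t ≠ 0) :
    ∃ l' : List W, l'.Sublist l ∧ l'.length + 1 = l.length ∧ l'.prod = l.prod * t := by
  classical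
  induction l with
  | nil => simp at h
  | cons x l ih =>
    obtain ⟨i, rfl⟩ := hl x (by simp)
    by_cases h0 : cocycle cs l.prod t = 0
    · rw [List.prod_cons, cocycle_mul, h0, zero_add, cocycle_simple] at h
      have h1 : l.prod * t * l.prod⁻¹ = cs.simple i := by
        by_contra h1; simp [h1] at h
      refine ⟨l, List.sublist_cons_self _ _, by simp, ?_⟩
      rw [mul_inv_eq_iff_eq_mul] at h1
      rw [List.prod_cons, mul_assoc, h1]; simp
    · obtain ⟨l', h1, h2, h3⟩ := ih (fun x hx => hl x (by simp [hx])) h0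
      exact ⟨cs.simple i :: l', h1.cons_cons _, by simp [h2], by simp [h3, mul_assoc]⟩

variable {B : Set W} (hB : ∀ x ∈ B, ∃ i, x = cs.simple i)

include hB

lemma mul_self_of_mem {x : W} (hx : x ∈ B) : x * x = 1 := by
  obtain ⟨i, rfl⟩ := hB x hx
  simp

lemma exists_word {w : W} (hw : w ∈ Subgroup.closure B) :
    ∃ l : List W, (∀ x ∈ l, x ∈ B) ∧ l.length = wordLength B w ∧ l.prod = w := by
  have hne : {n | ∃ l : List W, (∀ x ∈ l, x ∈ B) ∧ l.length = n ∧ l.prod = w}.Nonempty := by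
    rw [← Subgroup.mem_toSubmonoid, Subgroup.closure_toSubmonoid] at hw
    obtain ⟨l, hl, hl'⟩ := Submonoid.exists_list_of_mem_closure hw
    refine ⟨l.length, l, ?_, rfl, hl'⟩
    intro x hx
    rcases hl x hx with h | h
    · exact h
    · have : x⁻¹⁻¹ = x⁻¹ := inv_eq_of_mul_eq_one_left (mul_self_of_mem cs hB h)
      rw [inv_inv] at this
      rwa [this]
  exact Nat.sInf_mem hne

omit hB in
lemma wordLength_prod_le {l : List W} (hl : ∀ x ∈ l, x ∈ B) : wordLength B l.prod ≤ l.length :=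
  Nat.sInf_le ⟨l, hl, rfl, rfl⟩

/-- Multiplying by an inversion shortens an element. Both lengths are word lengths with respect to `B`:
a shortest word over `B` is shortened by deleting a letter, so parabolic lengths need not be compared
with lengths in `W`. -/
lemma wordLength_mul_lt {w t : W} (hw : w ∈ Subgroup.closure B) (h : cocycle cs w t ≠ 0) :
    wordLength B (w * t) < wordLength B w := by
  obtain ⟨l, h1, h2, rfl⟩ := exists_word cs hB hw
  obtain ⟨l', h3, h4, h5⟩ := exchange cs l (fun x hx => hB x (h1 x hx)) t h
  rw [← h2, ← h5]
  have := wordLength_prod_le (l := l') (fun x hx => h1 x (h3.subset hx))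
  omega

/-- A generator whose multiplication does not lengthen an element is an inversion of this element. -/
lemma cocycle_ne_zero_of_le {w t : W} (hw : w ∈ Subgroup.closure B) (ht : t ∈ B)
    (h : wordLength B (w * t) ≤ wordLength B w) : cocycle cs w t ≠ 0 := by
  classical
  intro h0
  have htt := mul_self_of_mem cs hB ht
  have h1 : cocycle cs (w * t) t ≠ 0 := by
    rw [cocycle_mul, mul_inv_cancel_right, h0]
    obtain ⟨i, rfl⟩ := hB t ht
    simp [cocycle_simple]
  have h2 := wordLength_mul_lt cs hB
    (Subgroup.mul_mem _ hw (Subgroup.subset_closure ht)) h1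
  rw [mul_assoc, htt, mul_one] at h2
  omega

/-- The last letter of a shortest word is an inversion. -/
lemma exists_cocycle_ne_zero {w : W} (hw : w ∈ Subgroup.closure B) (h1 : w ≠ 1) :
    ∃ t ∈ B, cocycle cs w t ≠ 0 := by
  obtain ⟨l, hl, hlen, rfl⟩ := exists_word cs hB hw
  rcases List.eq_nil_or_concat l with rfl | ⟨l', t, rfl⟩
  · simp at h1
  · have ht : t ∈ B := hl t (by simp)
    refine ⟨t, ht, cocycle_ne_zero_of_le cs hB hw ht ?_⟩
    have : (l'.concat t).prod * t = l'.prod := by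
      simp [mul_assoc, mul_self_of_mem cs hB ht]
    rw [this, ← hlen]
    have := wordLength_prod_le (B := B) (l := l') (fun x hx => hl x (by simp [hx]))
    simp; omega

/-- If `a, b ∈ B` do not commute and satisfy `(ab)⁴ = 1`, then the inversions of an element `w` of
`⟨B⟩` in the dihedral group `⟨a, b⟩` form an initial or a final segment of
`a, aba, bab, b`; if they also form a union of conjugacy classes, there are none or all. -/
lemma cocycle_eq_of_dihedral {a b w : W} (ha : a ∈ B) (hb : b ∈ B)
    (h4 : a * b * a * b = b * a * b * a) (h2 : a * b ≠ b * a)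
    (hw : w ∈ Subgroup.closure B)
    (hconj : ∀ g ∈ Subgroup.closure B, ∀ t ∈ Subgroup.closure B,
      cocycle cs w (g * t * g⁻¹) = cocycle cs w t) :
    cocycle cs w a = cocycle cs w b := by
  classical
  set D := Subgroup.closure ({a, b} : Set W) with hD
  have hDB : D ≤ Subgroup.closure B :=
    Subgroup.closure_mono (Set.insert_subset ha (Set.singleton_subset_iff.mpr hb))
  have haD : a ∈ D := Subgroup.subset_closure (by simp)
  have hbD : b ∈ D := Subgroup.subset_closure (by simp)
  have haa := mul_self_of_mem cs hB ha
  have hbb := mul_self_of_mem cs hB hb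
  have hai : a⁻¹ = a := inv_eq_of_mul_eq_one_left haa
  have hbi : b⁻¹ = b := inv_eq_of_mul_eq_one_left hbb
  have hia : ∀ t, cocycle cs a t = if t = a then 1 else 0 := by
    obtain ⟨i, rfl⟩ := hB a ha
    exact cocycle_simple cs i
  have hib : ∀ t, cocycle cs b t = if t = b then 1 else 0 := by
    obtain ⟨i, rfl⟩ := hB b hb
    exact cocycle_simple cs i
  -- `w = m g` with `m` of minimal length in the coset `w D`
  obtain ⟨g, hg, m, rfl, hm⟩ : ∃ g ∈ D, ∃ m, m * g = w ∧ ∀ h ∈ D,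
      wordLength B m ≤ wordLength B (m * h) := by
    let S : Set ℕ := {n | ∃ h ∈ D, wordLength B (w * h) = n}
    have hS : S.Nonempty := ⟨_, 1, D.one_mem, rfl⟩
    obtain ⟨h, hh, hh'⟩ := Nat.sInf_mem hS
    refine ⟨h⁻¹, D.inv_mem hh, w * h, by simp, fun k hk => ?_⟩
    rw [hh', mul_assoc]
    exact Nat.sInf_le ⟨h * k, D.mul_mem hh hk, rfl⟩
  have hmB : m ∈ Subgroup.closure B := by
    simpa using Subgroup.mul_mem _ hw (Subgroup.inv_mem _ (hDB hg))
  have hm0 : ∀ t ∈ D, cocycle cs m t = 0 := by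
    intro t ht
    by_contra h
    exact absurd (wordLength_mul_lt cs hB hmB h) (not_lt.mpr (hm t ht))
  have hwg : ∀ t ∈ D, cocycle cs (m * g) t = cocycle cs g t := by
    intro t ht
    rw [cocycle_mul, hm0 _ (D.mul_mem (D.mul_mem hg ht) (D.inv_mem hg)), add_zero]
  have hab : a ≠ b := by rintro rfl; exact h2 rfl
  have n1 : a * b * a ≠ a := fun h => hab <| by
    have : b * a = 1 := by simpa [mul_assoc] using h
    rw [← hbi]; exact (inv_eq_of_mul_eq_one_right this).symm
  have n2 : b * a * b ≠ a := fun h => h2 <| by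
    calc a * b = (b * a * b) * b := by rw [h]
      _ = b * a := by rw [mul_assoc, hbb, mul_one]
  have n3 : a * b * a ≠ b := fun h => h2 <| by
    calc a * b = (a * b * a) * a := by rw [mul_assoc, haa, mul_one]
      _ = b * a := by rw [h]
  have n4 : b * a * b ≠ b := fun h => hab <| by
    have : a * b = 1 := by simpa [mul_assoc] using h
    rw [← hbi]; exact (inv_eq_of_mul_eq_one_left this).symm
  have e1 : a * (b * a * b) * a⁻¹ = b * a * b := by
    rw [hai, ← mul_assoc, ← mul_assoc, h4, mul_assoc, haa, mul_one]
  have e2 : b * (a * b * a) * b⁻¹ = a * b * a := by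
    rw [hbi, ← mul_assoc, ← mul_assoc, ← h4, mul_assoc, hbb, mul_one]
  have e3 : a * (a * b * a) * a⁻¹ = b := by
    rw [hai, ← mul_assoc, ← mul_assoc, haa, one_mul, mul_assoc, haa, mul_one]
  have e4 : b * (b * a * b) * b⁻¹ = a := by
    rw [hbi, ← mul_assoc, ← mul_assoc, hbb, one_mul, mul_assoc, hbb, mul_one]
  let Q : ZMod 2 → ZMod 2 → ZMod 2 → ZMod 2 → Prop := fun p₁ p₂ p₃ p₄ =>
    ¬(p₁ ≠ p₂ ∧ p₂ ≠ p₃) ∧ ¬(p₂ ≠ p₃ ∧ p₃ ≠ p₄) ∧ ¬(p₁ ≠ p₂ ∧ p₃ ≠ p₄)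
  have key : ∀ g ∈ D, Q (cocycle cs g a) (cocycle cs g (a * b * a)) (cocycle cs g (b * a * b))
      (cocycle cs g b) := by
    have stepa : ∀ g, Q (cocycle cs g a) (cocycle cs g (a * b * a)) (cocycle cs g (b * a * b)) (cocycle cs g b) →
        Q (cocycle cs (g * a) a) (cocycle cs (g * a) (a * b * a)) (cocycle cs (g * a) (b * a * b))
          (cocycle cs (g * a) b) := by
      intro g hQ
      simp only [cocycle_mul, hia, e1, e3, n1, n2, hab.symm, if_true, if_false, mul_inv_cancel_right,
        show a * b * a⁻¹ = a * b * a by rw [hai], zero_add]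
      revert hQ
      generalize cocycle cs g a = p₁
      generalize cocycle cs g (a * b * a) = p₂
      generalize cocycle cs g (b * a * b) = p₃
      generalize cocycle cs g b = p₄
      revert p₁ p₂ p₃ p₄
      decide
    have stepb : ∀ g, Q (cocycle cs g a) (cocycle cs g (a * b * a)) (cocycle cs g (b * a * b)) (cocycle cs g b) →
        Q (cocycle cs (g * b) a) (cocycle cs (g * b) (a * b * a)) (cocycle cs (g * b) (b * a * b))
          (cocycle cs (g * b) b) := by
      intro g hQ
      simp only [cocycle_mul, hib, e2, e4, n3, n4, hab, if_true, if_false, mul_inv_cancel_right,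
        show b * a * b⁻¹ = b * a * b by rw [hbi], zero_add]
      revert hQ
      generalize cocycle cs g a = p₁
      generalize cocycle cs g (a * b * a) = p₂
      generalize cocycle cs g (b * a * b) = p₃
      generalize cocycle cs g b = p₄
      revert p₁ p₂ p₃ p₄
      decide
    intro g hg
    induction hg using Subgroup.closure_induction_right with
    | one => simp [Q]
    | mul_right x _ y hy ih =>
      rcases hy with rfl | rfl
      · exact stepa _ ih
      · exact stepb _ ih
    | mul_inv_cancel x _ y hy ih =>
      rcases hy with rfl | rfl
      · rw [hai]; exact stepa _ ih
      · rw [hbi]; exact stepb _ ih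
  have k := key g hg
  have c1 := hconj b (hDB hbD) a (hDB haD)
  have c2 := hconj a (hDB haD) b (hDB hbD)
  rw [hai] at c2
  rw [hbi] at c1
  rw [hwg _ (D.mul_mem (D.mul_mem hbD haD) hbD), hwg _ haD] at c1
  rw [hwg _ (D.mul_mem (D.mul_mem haD hbD) haD), hwg _ hbD] at c2
  rw [c1, c2] at k
  rw [hwg _ haD, hwg _ hbD]
  revert k
  generalize cocycle cs g a = p₁
  generalize cocycle cs g b = p₄
  revert p₁ p₄
  decide

/-- A nontrivial central involution of `⟨B⟩` is the longest element, provided that `B` is made of an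
element `a` and of conjugates of an element `b` such that `a` and `b` do not commute and `(ab)⁴ = 1`.
Its inversions are then all of `B`, and so are those of a longest element `z`, whence `z z₀` has no
inversion in `B`. -/
lemma longest_eq_of_central {a b z z₀ : W} (ha : a ∈ B) (hb : b ∈ B)
    (h4 : a * b * a * b = b * a * b * a) (h2 : a * b ≠ b * a)
    (hbc : ∀ t ∈ B, t ≠ a → ∃ g ∈ Subgroup.closure B, t = g * b * g⁻¹)
    (hz₀ : z₀ ∈ Subgroup.closure B) (hcen : ∀ g ∈ Subgroup.closure B, z₀ * g = g * z₀)
    (hne : z₀ ≠ 1) (hsq : z₀ * z₀ = 1) (hz : IsLongestElement B z) : z = z₀ := by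
  have hcen' : ∀ t ∈ Subgroup.closure B, z₀ * t * z₀⁻¹ = t := by
    intro t ht
    rw [hcen t ht, mul_inv_cancel_right]
  have hconj : ∀ g ∈ Subgroup.closure B, ∀ t ∈ Subgroup.closure B,
      cocycle cs z₀ (g * t * g⁻¹) = cocycle cs z₀ t := by
    intro g hg t ht
    have h1 := cocycle_mul cs g z₀ t
    rw [← hcen g hg, cocycle_mul, hcen' t ht, add_comm] at h1
    exact add_right_cancel h1
  have hab := cocycle_eq_of_dihedral cs hB ha hb h4 h2 hz₀ hconj
  have hall : ∀ t ∈ B, cocycle cs z₀ t = cocycle cs z₀ b := by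
    intro t ht
    by_cases h : t = a
    · rw [h, hab]
    · obtain ⟨g, hg, rfl⟩ := hbc t ht h
      exact hconj g hg b (Subgroup.subset_closure hb)
  obtain ⟨t₀, ht₀, hne₀⟩ := exists_cocycle_ne_zero cs hB hz₀ hne
  rw [hall t₀ ht₀] at hne₀
  have hzz : z * z₀ = 1 := by
    by_contra hcon
    obtain ⟨t, ht, htne⟩ := exists_cocycle_ne_zero cs hB (Subgroup.mul_mem _ hz.1 hz₀) hcon
    have htB := Subgroup.subset_closure (k := B) ht
    have h1 : cocycle cs z t ≠ 0 :=
      cocycle_ne_zero_of_le cs hB hz.1 ht (hz.2 _ (Subgroup.mul_mem _ hz.1 htB))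
    rw [cocycle_mul, hcen' t htB, hall t ht] at htne
    revert htne h1 hne₀
    generalize cocycle cs z t = p
    generalize cocycle cs z₀ b = p'
    revert p p'
    decide
  rw [eq_inv_of_mul_eq_one_left hzz, inv_eq_of_mul_eq_one_left hsq]

end Cocycle

end COdd
/-! ### Elements of a group satisfying the relations of type `Dₙ` -/

namespace COdd

section TypeD

variable {G : Type*} [Group G]

/-- The relations of the diagram consisting of a chain `g 0 - g 1 - ⋯ - g (N - 1)` and of a further
vertex `d` joined to `g 1` only, with all labels `3`. -/
structure DRelations (N : ℕ) (g : ℕ → G) (d : G) : Prop where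
  two_le : 2 ≤ N
  sq : ∀ j < N, g j * g j = 1
  sq_d : d * d = 1
  braid : ∀ j, j + 1 < N → g j * g (j + 1) * g j = g (j + 1) * g j * g (j + 1)
  comm : ∀ i j, i + 2 ≤ j → j < N → g i * g j = g j * g i
  comm_zero : g 0 * d = d * g 0
  comm_d : ∀ j, 2 ≤ j → j < N → d * g j = g j * d
  braid_d : d * g 1 * d = g 1 * d * g 1

/-- In the realization by signed permutations (with `g j` the transposition of the coordinates `j`
and `j + 1`), `flip g d k` changes the signs of the coordinates `0` and `k + 1`. -/
def flip (g : ℕ → G) (d : G) : ℕ → G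
  | 0 => d * g 0
  | k + 1 => g (k + 1) * flip g d k * g (k + 1)

/-- The product of the first `k` elements `flip g d`. For even `k` it changes the signs of the
coordinates `1, …, k`. -/
def flipProd (g : ℕ → G) (d : G) : ℕ → G
  | 0 => 1
  | k + 1 => flipProd g d k * flip g d k

lemma map_flip {H : Type*} [Group H] (φ : G →* H) (g : ℕ → G) (d : G) (k : ℕ) :
    φ (flip g d k) = flip (φ ∘ g) (φ d) k := by
  induction k with
  | zero => simp [flip]
  | succ k ih => simp [flip, ih]

lemma map_flipProd {H : Type*} [Group H] (φ : G →* H) (g : ℕ → G) (d : G) (k : ℕ) :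
    φ (flipProd g d k) = flipProd (φ ∘ g) (φ d) k := by
  induction k with
  | zero => simp [flipProd]
  | succ k ih => simp [flipProd, ih, map_flip]

lemma flip_congr {g g' : ℕ → G} {d : G} {k : ℕ} (h : ∀ j ≤ k, g j = g' j) :
    flip g d k = flip g' d k := by
  induction k with
  | zero => simp [flip, h 0 le_rfl]
  | succ k ih => rw [flip, flip, h (k + 1) le_rfl, ih (fun j hj => h j (by omega))]

lemma flipProd_congr {g g' : ℕ → G} {d : G} {k : ℕ} (h : ∀ j < k, g j = g' j) :
    flipProd g d k = flipProd g' d k := by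
  induction k with
  | zero => rfl
  | succ k ih =>
    rw [flipProd, flipProd, ih (fun j hj => h j (by omega)),
      flip_congr (fun j hj => h j (by omega))]

lemma flip_mem {K : Subgroup G} {g : ℕ → G} {d : G} {k : ℕ} (hg : ∀ j ≤ k, g j ∈ K) (hd : d ∈ K) :
    flip g d k ∈ K := by
  induction k with
  | zero => exact K.mul_mem hd (hg 0 le_rfl)
  | succ k ih =>
    exact K.mul_mem (K.mul_mem (hg _ le_rfl) (ih fun j hj => hg j (by omega))) (hg _ le_rfl)

lemma flipProd_mem {K : Subgroup G} {g : ℕ → G} {d : G} {k : ℕ} (hg : ∀ j < k, g j ∈ K)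
    (hd : d ∈ K) : flipProd g d k ∈ K := by
  induction k with
  | zero => exact K.one_mem
  | succ k ih =>
    exact K.mul_mem (ih fun j hj => hg j (by omega)) (flip_mem (fun j hj => hg j (by omega)) hd)

/-- An involution which commutes with `g j` for `j ≥ 1` and exchanges `g 0` and `d` commutes with the
products of flips. -/
lemma commute_flipProd_of_swap {a : G} {g : ℕ → G} {d : G} {k : ℕ} (h0 : a * g 0 = d * a)
    (hd : a * d = g 0 * a) (hc : g 0 * d = d * g 0) (hg : ∀ j, 1 ≤ j → j < k → Commute a (g j)) :
    Commute a (flipProd g d k) := by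
  have h (i : ℕ) (hi : i < k) : Commute a (flip g d i) := by
    induction i with
    | zero =>
      change a * (d * g 0) = d * g 0 * a
      rw [← mul_assoc, hd, mul_assoc, h0, ← mul_assoc, hc]
    | succ i ih =>
      have h1 := hg (i + 1) (by omega) hi
      exact (h1.mul_right (ih (by omega))).mul_right h1
  induction k with
  | zero => exact Commute.one_right a
  | succ k ih =>
    exact (ih (fun j h1 h2 => hg j h1 (by omega)) (fun i hi => h i (by omega))).mul_right
      (h k (by omega))

namespace DRelations

variable {N : ℕ} {g : ℕ → G} {d : G} (R : DRelations N g d)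

include R

lemma cancel {j : ℕ} (hj : j < N) (x : G) : g j * (g j * x) = x := by
  rw [← mul_assoc, R.sq j hj, one_mul]

lemma cancel_d (x : G) : d * (d * x) = x := by
  rw [← mul_assoc, R.sq_d, one_mul]

lemma commute_flip_of_lt {j k : ℕ} (hkj : k + 2 ≤ j) (hj : j < N) : Commute (g j) (flip g d k) := by
  induction k with
  | zero =>
    exact Commute.mul_right (R.comm_d j hkj hj).symm (R.comm 0 j hkj hj).symm
  | succ k ih =>
    have h1 : Commute (g j) (g (k + 1)) := (R.comm (k + 1) j hkj hj).symm
    exact (h1.mul_right (ih (by omega))).mul_right h1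

lemma commute_flip_of_gt {j k : ℕ} (h1j : 1 ≤ j) (hjk : j < k) (hk : k < N) :
    Commute (g j) (flip g d k) := by
  induction k, hjk using Nat.le_induction with
  | base =>
    obtain ⟨i, rfl⟩ := Nat.exists_eq_add_of_le' h1j
    have hb := R.braid (i + 1) hk
    have hc : g (i + 1 + 1) * flip g d i = flip g d i * g (i + 1 + 1) :=
      R.commute_flip_of_lt (by omega) hk
    change g (i + 1) * (g (i + 1 + 1) * (g (i + 1) * flip g d i * g (i + 1)) * g (i + 1 + 1)) =
      (g (i + 1 + 1) * (g (i + 1) * flip g d i * g (i + 1)) * g (i + 1 + 1)) * g (i + 1)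
    calc _ = (g (i + 1) * g (i + 1 + 1) * g (i + 1)) * flip g d i * g (i + 1) * g (i + 1 + 1) := by
          simp only [mul_assoc]
      _ = g (i + 1 + 1) * g (i + 1) * (g (i + 1 + 1) * flip g d i) * g (i + 1) * g (i + 1 + 1) := by
          rw [hb]; simp only [mul_assoc]
      _ = g (i + 1 + 1) * g (i + 1) * flip g d i * (g (i + 1 + 1) * g (i + 1) * g (i + 1 + 1)) := by
          rw [hc]; simp only [mul_assoc]
      _ = _ := by rw [← hb]; simp only [mul_assoc]
  | succ k hjk ih =>
    have hjk' : j + 1 ≤ k := hjk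
    have h1 : Commute (g j) (g (k + 1)) := R.comm j (k + 1) (by omega) hk
    exact (h1.mul_right (ih (by omega))).mul_right h1

lemma flip_sq {k : ℕ} (hk : k < N) : flip g d k * flip g d k = 1 := by
  induction k with
  | zero =>
    change d * g 0 * (d * g 0) = 1
    rw [mul_assoc, ← mul_assoc (g 0), R.comm_zero, mul_assoc, R.sq 0 hk, mul_one, R.sq_d]
  | succ k ih =>
    simp only [flip, mul_assoc, R.cancel hk]
    rw [← mul_assoc (flip g d k), ih (by omega), one_mul, R.sq _ hk]

lemma commute_flip_zero_one : Commute (flip g d 0) (flip g d 1) := by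
  have h2 := R.two_le
  have hb : g 0 * g 1 * g 0 = g 1 * g 0 * g 1 := R.braid 0 h2
  have hd := R.braid_d
  have hc := R.comm_zero
  change d * g 0 * (g 1 * (d * g 0) * g 1) = g 1 * (d * g 0) * g 1 * (d * g 0)
  calc _ = g 0 * (d * g 1 * (d * g 0)) * g 1 := by rw [← hc]; simp only [mul_assoc]
    _ = g 0 * (d * g 1 * d) * g 0 * g 1 := by simp only [mul_assoc]
    _ = g 0 * g 1 * d * (g 1 * g 0 * g 1) := by rw [hd]; simp only [mul_assoc]
    _ = g 0 * g 1 * (d * g 0) * g 1 * g 0 := by rw [← hb]; simp only [mul_assoc]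
    _ = (g 0 * g 1 * g 0) * d * g 1 * g 0 := by rw [← hc]; simp only [mul_assoc]
    _ = g 1 * g 0 * (g 1 * d * g 1) * g 0 := by rw [hb]; simp only [mul_assoc]
    _ = g 1 * (g 0 * d) * g 1 * (d * g 0) := by rw [← hd]; simp only [mul_assoc]
    _ = _ := by rw [hc]

lemma conj_flip_one : g 0 * flip g d 1 * g 0 = flip g d 0 * flip g d 1 := by
  have h2 := R.two_le
  have hb : g 0 * g 1 * g 0 = g 1 * g 0 * g 1 := R.braid 0 h2
  have hd := R.braid_d
  have hc := R.comm_zero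
  rw [R.commute_flip_zero_one.eq]
  change g 0 * (g 1 * (d * g 0) * g 1) * g 0 = g 1 * (d * g 0) * g 1 * (d * g 0)
  calc _ = (g 0 * g 1 * g 0) * d * g 1 * g 0 := by rw [← hc]; simp only [mul_assoc]
    _ = g 1 * g 0 * (g 1 * d * g 1) * g 0 := by rw [hb]; simp only [mul_assoc]
    _ = g 1 * (g 0 * d) * g 1 * (d * g 0) := by rw [← hd]; simp only [mul_assoc]
    _ = _ := by rw [hc]

lemma commute_flip_lt {i j : ℕ} (hij : i < j) (hj : j < N) :
    Commute (flip g d i) (flip g d j) := by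
  induction i with
  | zero =>
    induction j, hij using Nat.le_induction with
    | base => exact R.commute_flip_zero_one
    | succ j hij ih =>
      have hij' : 0 + 1 ≤ j := hij
      have h1 : Commute (flip g d 0) (g (j + 1)) :=
        (R.commute_flip_of_lt (by omega) hj).symm
      exact (h1.mul_right (ih (by omega))).mul_right h1
  | succ i ih =>
    have h1 : Commute (g (i + 1)) (flip g d j) := R.commute_flip_of_gt (by omega) hij hj
    exact (h1.mul_left (ih (by omega))).mul_left h1

lemma commute_flip {i j : ℕ} (hi : i < N) (hj : j < N) : Commute (flip g d i) (flip g d j) := by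
  rcases lt_trichotomy i j with h | rfl | h
  · exact R.commute_flip_lt h hj
  · exact Commute.refl _
  · exact (R.commute_flip_lt h hi).symm

lemma commute_flip_flipProd {i k : ℕ} (hi : i < N) (hk : k ≤ N) :
    Commute (flip g d i) (flipProd g d k) := by
  induction k with
  | zero => exact Commute.one_right _
  | succ k ih => exact (ih (by omega)).mul_right (R.commute_flip hi hk)

lemma flipProd_sq {k : ℕ} (hk : k ≤ N) : flipProd g d k * flipProd g d k = 1 := by
  induction k with
  | zero => simp [flipProd]
  | succ k ih =>
    have h1 := R.commute_flip_flipProd (i := k) (k := k) (by omega) (by omega)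
    calc flipProd g d k * flip g d k * (flipProd g d k * flip g d k)
        = flipProd g d k * (flip g d k * flipProd g d k) * flip g d k := by simp only [mul_assoc]
      _ = (flipProd g d k * flipProd g d k) * (flip g d k * flip g d k) := by
          rw [h1.eq]; simp only [mul_assoc]
      _ = 1 := by rw [ih (by omega), R.flip_sq (by omega), one_mul]

lemma conj_flip {k : ℕ} (h1k : 1 ≤ k) (hk : k < N) :
    g 0 * flip g d k * g 0 = flip g d 0 * flip g d k := by
  induction k, h1k using Nat.le_induction with
  | base => exact R.conj_flip_one
  | succ k h1k ih =>
    have h1 := R.comm 0 (k + 1) (by omega) hk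
    have h2 : g (k + 1) * flip g d 0 = flip g d 0 * g (k + 1) := R.commute_flip_of_lt (by omega) hk
    change g 0 * (g (k + 1) * flip g d k * g (k + 1)) * g 0 =
      flip g d 0 * (g (k + 1) * flip g d k * g (k + 1))
    calc _ = (g 0 * g (k + 1)) * flip g d k * (g (k + 1) * g 0) := by simp only [mul_assoc]
      _ = (g (k + 1) * g 0) * flip g d k * (g 0 * g (k + 1)) := by rw [h1]
      _ = g (k + 1) * (g 0 * flip g d k * g 0) * g (k + 1) := by
          simp only [mul_assoc]
      _ = (g (k + 1) * flip g d 0) * flip g d k * g (k + 1) := by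
          rw [ih (by omega)]; simp only [mul_assoc]
      _ = _ := by rw [h2]; simp only [mul_assoc]

lemma commute_flipProd_of_lt {j k : ℕ} (hkj : k + 1 ≤ j) (hj : j < N) :
    Commute (g j) (flipProd g d k) := by
  induction k with
  | zero => exact Commute.one_right _
  | succ k ih => exact (ih (by omega)).mul_right (R.commute_flip_of_lt (by omega) hj)

/-- `g j` exchanges the consecutive factors `flip g d (j - 1)` and `flip g d j` and commutes with the
others. -/
lemma commute_flipProd {j k : ℕ} (h1j : 1 ≤ j) (hjk : j < k) (hk : k ≤ N) :
    Commute (g j) (flipProd g d k) := by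
  induction k, hjk using Nat.le_induction with
  | base =>
    obtain ⟨i, rfl⟩ := Nat.exists_eq_add_of_le' h1j
    have h1 : Commute (g (i + 1)) (flipProd g d i) := R.commute_flipProd_of_lt (by omega) (by omega)
    have h2 : Commute (g (i + 1)) (flip g d i * flip g d (i + 1)) := by
      have hi : i + 1 < N := hk
      have h3 : flip g d i * flip g d (i + 1) = flip g d (i + 1) * flip g d i :=
        R.commute_flip (by omega) hi
      have h4 : g (i + 1) * flip g d i = flip g d (i + 1) * g (i + 1) := by
        simp only [flip, mul_assoc, R.sq _ hi, mul_one]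
      have h5 : g (i + 1) * flip g d (i + 1) = flip g d i * g (i + 1) := by
        simp only [flip, mul_assoc, R.cancel hi]
      change g (i + 1) * (flip g d i * flip g d (i + 1)) = flip g d i * flip g d (i + 1) * g (i + 1)
      rw [← mul_assoc, h4, mul_assoc, h5, ← mul_assoc, ← h3]
    have h3 := h1.mul_right h2
    rw [← mul_assoc] at h3
    exact h3
  | succ k hjk ih =>
    exact (ih (by omega)).mul_right (R.commute_flip_of_gt h1j hjk (by omega))

lemma conj_flipProd {k : ℕ} (h1k : 1 ≤ k) (hk : k ≤ N) :
    g 0 * flipProd g d k * g 0 = flip g d 0 ^ (k + 1) * flipProd g d k := by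
  have h0N : 0 < N := by have := R.two_le; omega
  induction k, h1k using Nat.le_induction with
  | base =>
    have h := R.flip_sq h0N
    rw [pow_two, h, one_mul]
    change g 0 * (1 * (d * g 0)) * g 0 = 1 * (d * g 0)
    simp only [one_mul, mul_assoc, R.sq 0 h0N, mul_one, R.comm_zero]
  | succ k h1k ih =>
    have hc : flip g d 0 * flipProd g d k = flipProd g d k * flip g d 0 :=
      R.commute_flip_flipProd h0N (by omega)
    change g 0 * (flipProd g d k * flip g d k) * g 0 = _ * (flipProd g d k * flip g d k)
    calc _ = (g 0 * flipProd g d k * g 0) * (g 0 * flip g d k * g 0) := by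
          simp only [mul_assoc, R.cancel h0N]
      _ = flip g d 0 ^ (k + 1) * (flipProd g d k * flip g d 0) * flip g d k := by
          rw [ih (by omega), R.conj_flip h1k (by omega)]; simp only [mul_assoc]
      _ = _ := by rw [← hc, pow_succ _ (k + 1)]; simp only [mul_assoc]

/-- For an even number of factors, the product of the flips exchanges `g 0` and `d`. -/
lemma flipProd_mul_mul {q : ℕ} (hN : N = 2 * q) : flipProd g d N * g 0 * flipProd g d N = d := by
  have h2 := R.two_le
  have h1 := R.conj_flipProd (k := N) (by omega) le_rfl
  have h3 : flip g d 0 ^ (N + 1) = flip g d 0 := by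
    rw [pow_succ, hN, pow_mul, pow_two, R.flip_sq (by omega), one_pow, one_mul]
  rw [h3] at h1
  have h4 : flipProd g d N * g 0 = d * flipProd g d N := by
    calc flipProd g d N * g 0 = g 0 * (g 0 * flipProd g d N * g 0) := by
          simp only [mul_assoc, R.cancel (show 0 < N by omega)]
      _ = (g 0 * d) * g 0 * flipProd g d N := by
          rw [h1]; simp only [flip, mul_assoc]
      _ = _ := by rw [R.comm_zero]; simp only [mul_assoc, R.cancel (show 0 < N by omega)]
  rw [h4, mul_assoc, R.flipProd_sq le_rfl, mul_one]

lemma flipProd_mul_mul' {q : ℕ} (hN : N = 2 * q) : flipProd g d N * d * flipProd g d N = g 0 := by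
  have h := R.flipProd_sq le_rfl
  calc flipProd g d N * d * flipProd g d N
      = flipProd g d N * (flipProd g d N * g 0 * flipProd g d N) * flipProd g d N := by
        rw [R.flipProd_mul_mul hN]
    _ = (flipProd g d N * flipProd g d N) * g 0 * (flipProd g d N * flipProd g d N) := by
        simp only [mul_assoc]
    _ = g 0 := by rw [h, one_mul, mul_one]

end DRelations

end TypeD

end COdd
/-! ### The new Coxeter matrix -/

namespace COdd

set_option linter.unusedSectionVars false

/-- The hypotheses of the construction, with the base `B = {a, g 0, …, g (2q - 1)}` listed from the
end of the diagram carrying the label `4`. -/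
structure Setup (m : W → W → ℕ) (S B : Set W) (q : ℕ) (a : W) (g : ℕ → W) : Prop where
  one_le : 1 ≤ q
  subset : B ⊆ S
  diag : ∀ s ∈ S, m s s = 1
  symm : ∀ s ∈ S, ∀ t ∈ S, m s t = m t s
  off : ∀ s ∈ S, ∀ t ∈ S, s ≠ t → m s t ≠ 1
  mem_a : a ∈ B
  mem_g : ∀ j, g j ∈ B
  ne_a : ∀ j, g j ≠ a
  exists_g : ∀ x ∈ B, x ≠ a → ∃ j < 2 * q, x = g j
  inj_g : ∀ i < 2 * q, ∀ j < 2 * q, g i = g j → i = j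
  m_succ : ∀ j, j + 1 < 2 * q → m (g j) (g (j + 1)) = 3
  m_far : ∀ i j, i + 2 ≤ j → j < 2 * q → m (g i) (g j) = 2
  m_a_zero : m a (g 0) = 4
  m_a_far : ∀ j, 1 ≤ j → j < 2 * q → m a (g j) = 2
  cond : ∀ s ∈ S, s ∉ B → ∀ t ∈ B, m s a ≠ 0 → m s t = 2

open scoped Classical in
/-- The order of the product of `d = aba` with a generator `t ≠ a`. -/
noncomputable def orderD (m : W → W → ℕ) (B : Set W) (a b t : W) : ℕ :=
  if t = b then 2 else if t ∈ B then m b t else m a t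

open scoped Classical in
/-- The Coxeter matrix of `(S \ {a}) ∪ {d}`, indexed by `S` with `a` standing for `d`. -/
noncomputable def newM (m : W → W → ℕ) (B : Set W) (a b s t : W) : ℕ :=
  if s = t then 1 else if s = a then orderD m B a b t
  else if t = a then orderD m B a b s else m s t

open scoped Classical in
/-- The order of the product of the longest element `z` of `⟨B⟩` with a generator `t`. -/
noncomputable def orderZ (m : W → W → ℕ) (B : Set W) (a t : W) : ℕ :=
  if t ∈ B then 2 else m a t

namespace Setup

variable {m : W → W → ℕ} {S B : Set W} {q : ℕ} {a : W} {g : ℕ → W} (T : Setup m S B q a g)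

include T

lemma mem_aS : a ∈ S := T.subset T.mem_a
lemma mem_gS (j : ℕ) : g j ∈ S := T.subset (T.mem_g j)

lemma g_ne {i j : ℕ} (hi : i < 2 * q) (hj : j < 2 * q) (h : i ≠ j) : g i ≠ g j :=
  fun h' => h (T.inj_g i hi j hj h')

lemma zero_lt : 0 < 2 * q := by have := T.one_le; omega
lemma one_lt : 1 < 2 * q := by have := T.one_le; omega

/-- A generator outside `B` is either not related to `a` or commutes with it. -/
lemma m_a_outside {t : W} (ht : t ∈ S) (htB : t ∉ B) : m a t = 0 ∨ m a t = 2 := by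
  rw [T.symm a T.mem_aS t ht]
  by_cases h : m t a = 0
  · exact Or.inl h
  · exact Or.inr (T.cond t ht htB a T.mem_a h)

lemma m_outside {t x : W} (ht : t ∈ S) (htB : t ∉ B) (hx : x ∈ B) (h : m a t ≠ 0) : m x t = 2 := by
  rw [T.symm x (T.subset hx) t ht]
  exact T.cond t ht htB x hx (by rwa [T.symm t ht a T.mem_aS])

omit T in
lemma orderD_zero : orderD m B a (g 0) (g 0) = 2 := if_pos rfl

lemma orderD_one : orderD m B a (g 0) (g 1) = 3 := by
  rw [orderD, if_neg (T.g_ne T.one_lt T.zero_lt one_ne_zero), if_pos (T.mem_g 1)]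
  exact T.m_succ 0 T.one_lt

lemma orderD_far {j : ℕ} (h2j : 2 ≤ j) (hj : j < 2 * q) : orderD m B a (g 0) (g j) = 2 := by
  rw [orderD, if_neg (T.g_ne hj T.zero_lt (by omega)), if_pos (T.mem_g j)]
  exact T.m_far 0 j h2j hj

lemma orderD_outside {t : W} (htB : t ∉ B) : orderD m B a (g 0) t = m a t := by
  rw [orderD, if_neg (by rintro rfl; exact htB (T.mem_g 0)), if_neg htB]

lemma orderD_ne_one {t : W} (ht : t ∈ S) (hta : t ≠ a) : orderD m B a (g 0) t ≠ 1 := by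
  unfold orderD
  split_ifs with h1 h2
  · norm_num
  · exact T.off _ (T.mem_gS 0) t ht (Ne.symm h1)
  · exact T.off _ T.mem_aS t ht hta.symm

omit T in
lemma newM_self (s : W) : newM m B a (g 0) s s = 1 := if_pos rfl

omit T in
lemma newM_a {t : W} (hta : t ≠ a) : newM m B a (g 0) a t = orderD m B a (g 0) t := by
  rw [newM, if_neg hta.symm, if_pos rfl]

omit T in
lemma newM_a' {t : W} (hta : t ≠ a) : newM m B a (g 0) t a = orderD m B a (g 0) t := by
  rw [newM, if_neg hta, if_neg hta, if_pos rfl]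

lemma newM_eq {s t : W} (hs : s ∈ S) (hsa : s ≠ a) (hta : t ≠ a) :
    newM m B a (g 0) s t = m s t := by
  unfold newM
  split_ifs with h1
  · rw [← h1, T.diag s hs]
  · rfl

lemma newM_symm {s t : W} (hs : s ∈ S) (ht : t ∈ S) :
    newM m B a (g 0) s t = newM m B a (g 0) t s := by
  by_cases hsa : s = a
  · subst hsa
    by_cases hta : t = s
    · rw [hta]
    · rw [newM_a hta, newM_a' hta]
  · by_cases hta : t = a
    · subst hta
      rw [newM_a hsa, newM_a' hsa]
    · rw [T.newM_eq hs hsa hta, T.newM_eq ht hta hsa, T.symm s hs t ht]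

lemma newM_ne_one {s t : W} (hs : s ∈ S) (ht : t ∈ S) (hst : s ≠ t) :
    newM m B a (g 0) s t ≠ 1 := by
  by_cases hsa : s = a
  · subst hsa
    rw [newM_a hst.symm]
    exact T.orderD_ne_one ht hst.symm
  · by_cases hta : t = a
    · subst hta
      rw [newM_a' hsa]
      exact T.orderD_ne_one hs hsa
    · rw [T.newM_eq hs hsa hta]
      exact T.off s hs t ht hst

lemma orderZ_ne_one {t : W} (ht : t ∈ S) : orderZ m B a t ≠ 1 := by
  unfold orderZ
  split_ifs with h
  · norm_num
  · exact T.off _ T.mem_aS t ht (fun h' => h (h' ▸ T.mem_a))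

omit T in
lemma orderZ_mem {t : W} (ht : t ∈ B) : orderZ m B a t = 2 := if_pos ht

omit T in
lemma orderZ_outside {t : W} (ht : t ∉ B) : orderZ m B a t = m a t := if_neg ht

/-- The Coxeter matrix of the new system, indexed by `Option S`, where `some a` stands for `d = aba`
and `none` stands for the longest element `z` of `⟨B⟩`. -/
noncomputable def matrix : CoxeterMatrix (Option S) where
  M := Matrix.of fun x y => match x, y with
    | none, none => 1
    | none, some t => orderZ m B a t
    | some s, none => orderZ m B a s
    | some s, some t => newM m B a (g 0) s t
  isSymm := by
    ext x y
    rcases x with _ | ⟨s, hs⟩ <;> rcases y with _ | ⟨t, ht⟩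
    · rfl
    · rfl
    · rfl
    · exact (T.newM_symm hs ht).symm
  diagonal := by
    rintro (_ | ⟨s, hs⟩)
    · rfl
    · exact newM_self s
  off_diagonal := by
    rintro (_ | ⟨s, hs⟩) (_ | ⟨t, ht⟩) h
    · exact absurd rfl h
    · exact T.orderZ_ne_one ht
    · exact T.orderZ_ne_one hs
    · exact T.newM_ne_one hs ht (fun h' => h (by subst h'; rfl))

end Setup

/-! ### Relations in groups with generators satisfying the new matrix -/

section Involutions

variable {P : Type*} [Group P]

lemma commute_of_pow_two {x y : P} (hx : x * x = 1) (hy : y * y = 1) (h : (x * y) ^ 2 = 1) :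
    x * y = y * x := by
  rw [pow_two] at h
  rw [eq_inv_of_mul_eq_one_left h, mul_inv_rev, inv_eq_of_mul_eq_one_left hx,
    inv_eq_of_mul_eq_one_left hy]

lemma pow_two_of_commute {x y : P} (hx : x * x = 1) (hy : y * y = 1) (h : x * y = y * x) :
    (x * y) ^ 2 = 1 := by
  rw [pow_two, mul_assoc, ← mul_assoc y, ← h, mul_assoc x, hy, mul_one, hx]

lemma braid_of_pow_three {x y : P} (hx : x * x = 1) (hy : y * y = 1) (h : (x * y) ^ 3 = 1) :
    x * y * x = y * x * y := by
  have h1 : x * y * x * (y * x * y) = 1 := by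
    rw [← h, pow_succ, pow_two]; simp only [mul_assoc]
  rw [eq_inv_of_mul_eq_one_left h1]
  simp only [mul_inv_rev, inv_eq_of_mul_eq_one_left hx, inv_eq_of_mul_eq_one_left hy, mul_assoc]

lemma pow_swap {x y : P} (hx : x * x = 1) (hy : y * y = 1) {k : ℕ} (h : (x * y) ^ k = 1) :
    (y * x) ^ k = 1 := by
  have h1 : y * x = (x * y)⁻¹ := by
    rw [mul_inv_rev, inv_eq_of_mul_eq_one_left hx, inv_eq_of_mul_eq_one_left hy]
  rw [h1, inv_pow, h, inv_one]

end Involutions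

namespace Setup

variable {m : W → W → ℕ} {S B : Set W} {q : ℕ} {a : W} {g : ℕ → W} (T : Setup m S B q a g)

include T

/-- Involutions satisfying the relations of the new matrix satisfy those of type `Dₙ`; this applies both
to the new generators in `W` and to the abstract Coxeter group of the new matrix. -/
lemma dRelations {P : Type*} [Group P] (σ : W → P)
    (hσ : ∀ s ∈ S, ∀ t ∈ S, (σ s * σ t) ^ newM m B a (g 0) s t = 1) :
    DRelations (2 * q) (σ ∘ g) (σ a) := by
  have hsq : ∀ s ∈ S, σ s * σ s = 1 := by
    intro s hs
    have := hσ s hs s hs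
    rwa [newM_self, pow_one] at this
  have hgg : ∀ i j, newM m B a (g 0) (g i) (g j) = m (g i) (g j) := fun i j =>
    T.newM_eq (T.mem_gS i) (T.ne_a i) (T.ne_a j)
  have haS := T.mem_aS
  have hgS := T.mem_gS
  refine ⟨by have := T.one_le; omega, fun j _ => hsq _ (hgS j), hsq a haS, ?_, ?_, ?_, ?_, ?_⟩
  · intro j hj
    have h := hσ _ (hgS j) _ (hgS (j + 1))
    rw [hgg, T.m_succ j hj] at h
    exact braid_of_pow_three (hsq _ (hgS j)) (hsq _ (hgS (j + 1))) h
  · intro i j hij hj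
    have h := hσ _ (hgS i) _ (hgS j)
    rw [hgg, T.m_far i j hij hj] at h
    exact commute_of_pow_two (hsq _ (hgS i)) (hsq _ (hgS j)) h
  · have h := hσ _ haS _ (hgS 0)
    rw [newM_a (T.ne_a 0), orderD_zero] at h
    exact (commute_of_pow_two (hsq _ haS) (hsq _ (hgS 0)) h).symm
  · intro j h2j hj
    have h := hσ _ haS _ (hgS j)
    rw [newM_a (T.ne_a j), T.orderD_far h2j hj] at h
    exact commute_of_pow_two (hsq _ haS) (hsq _ (hgS j)) h
  · have h := hσ _ haS _ (hgS 1)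
    rw [newM_a (T.ne_a 1), T.orderD_one] at h
    exact braid_of_pow_three (hsq _ haS) (hsq _ (hgS 1)) h

end Setup

end COdd
/-! ### The central involution of `⟨B⟩` -/

namespace COdd

namespace Setup

variable {m : W → W → ℕ} {S B : Set W} {q : ℕ} {a : W} {g : ℕ → W} (T : Setup m S B q a g)
  {cm : CoxeterMatrix S} (cs : CoxeterSystem cm W) (hs : ∀ s : S, cs.simple s = (s : W))
  (hm : ∀ s t : S, cm.M s t = m s t)

include hs hm in
lemma rel {s t : W} (hsS : s ∈ S) (htS : t ∈ S) : (s * t) ^ m s t = 1 := by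
  have h := cs.simple_mul_simple_pow ⟨s, hsS⟩ ⟨t, htS⟩
  rwa [hs, hs, hm] at h

include hs in
lemma sq {s : W} (hsS : s ∈ S) : s * s = 1 := by
  have h := cs.simple_mul_simple_self ⟨s, hsS⟩
  rwa [hs] at h

include hs hm in
lemma commute_of_two {s t : W} (hsS : s ∈ S) (htS : t ∈ S) (h : m s t = 2) : s * t = t * s := by
  have h' := rel cs hs hm hsS htS
  rw [h] at h'
  exact commute_of_pow_two (sq cs hs hsS) (sq cs hs htS) h'

include hs hm in
lemma not_commute {s t : W} (hsS : s ∈ S) (htS : t ∈ S) (h : 3 ≤ m s t) : s * t ≠ t * s := by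
  have h' := simple_mul_simple_ne cs (i := ⟨s, hsS⟩) (j := ⟨t, htS⟩) (by
    have := hm ⟨s, hsS⟩ ⟨t, htS⟩
    change 3 ≤ cm.M _ _
    rwa [this])
  rwa [hs, hs] at h'

open scoped Classical in
/-- The new generator replacing `s`: `d = aba` replaces `a`, the others are unchanged. -/
noncomputable def newGen (a b s : W) : W := if s = a then a * b * a else s

omit [Group W] in
lemma newGen_a [Group W] (b : W) : newGen a b a = a * b * a := if_pos rfl

omit [Group W] in
lemma newGen_ne [Group W] {b s : W} (h : s ≠ a) : newGen a b s = s := if_neg h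

include T

lemma newGen_comp : newGen a (g 0) ∘ g = g := by
  funext j
  exact newGen_ne (T.ne_a j)

include hs hm

lemma braid_four : a * g 0 * a * g 0 = g 0 * a * g 0 * a := by
  have h := rel cs hs hm T.mem_aS (T.mem_gS 0)
  have ha := sq cs hs T.mem_aS
  have hb := sq cs hs (T.mem_gS 0)
  rw [T.m_a_zero] at h
  have h1 : a * g 0 * a * g 0 * (a * g 0 * a * g 0) = 1 := by
    rw [← h, pow_succ, pow_succ, pow_two]; simp only [mul_assoc]
  rw [eq_inv_of_mul_eq_one_left h1]
  simp only [mul_inv_rev, inv_eq_of_mul_eq_one_left ha, inv_eq_of_mul_eq_one_left hb, mul_assoc]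

lemma d_sq : a * g 0 * a * (a * g 0 * a) = 1 := by
  have ha := sq cs hs T.mem_aS
  have hb := sq cs hs (T.mem_gS 0)
  rw [mul_assoc (a * g 0) a, ← mul_assoc a, ← mul_assoc a, ha, one_mul, mul_assoc a,
    ← mul_assoc (g 0), hb, one_mul, ha]

lemma d_rel {t : W} (ht : t ∈ S) (hta : t ≠ a) :
    (a * g 0 * a * t) ^ orderD m B a (g 0) t = 1 := by
  have ha := sq cs hs T.mem_aS
  have hb := sq cs hs (T.mem_gS 0)
  have hd := T.d_sq cs hs hm
  by_cases htB : t ∈ B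
  · obtain ⟨j, hj, rfl⟩ := T.exists_g t htB hta
    rcases Nat.eq_zero_or_pos j with rfl | hj0
    · rw [orderD_zero]
      apply pow_two_of_commute hd hb
      rw [T.braid_four cs hs hm]
      simp only [mul_assoc]
    · have hc := commute_of_two cs hs hm T.mem_aS (T.mem_gS j) (T.m_a_far j hj0 hj)
      have hai : a⁻¹ = a := inv_eq_of_mul_eq_one_left ha
      have h1 : a * g 0 * a * g j = a * (g 0 * g j) * a⁻¹ := by
        rw [hai]; simp only [mul_assoc]; rw [hc]
      rw [h1, conj_pow]
      have h2 : orderD m B a (g 0) (g j) = m (g 0) (g j) := by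
        rw [orderD, if_neg (T.g_ne hj T.zero_lt (by omega)), if_pos htB]
      rw [h2, rel cs hs hm (T.mem_gS 0) (T.mem_gS j), mul_one, mul_inv_cancel]
  · rw [T.orderD_outside htB]
    rcases T.m_a_outside ht htB with h | h
    · rw [h, pow_zero]
    · have h1 := commute_of_two cs hs hm T.mem_aS ht h
      have h2 := commute_of_two cs hs hm (T.mem_gS 0) ht
        (T.m_outside ht htB (T.mem_g 0) (by omega))
      rw [h]
      refine pow_two_of_commute hd (sq cs hs ht) ?_
      have c1 : Commute a t := h1
      have c2 : Commute (g 0) t := h2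
      exact (c1.mul_left c2).mul_left c1

lemma newGen_sq {s : W} (hsS : s ∈ S) : newGen a (g 0) s * newGen a (g 0) s = 1 := by
  by_cases h : s = a
  · subst h
    rw [newGen_a]
    exact T.d_sq cs hs hm
  · rw [newGen_ne h]
    exact sq cs hs hsS

lemma newGen_rel : ∀ s ∈ S, ∀ t ∈ S,
    (newGen a (g 0) s * newGen a (g 0) t) ^ newM m B a (g 0) s t = 1 := by
  intro s hsS t htS
  by_cases hst : s = t
  · subst hst
    rw [newM_self, pow_one, T.newGen_sq cs hs hm hsS]
  by_cases hsa : s = a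
  · subst hsa
    rw [newM_a (Ne.symm hst), newGen_a, newGen_ne (Ne.symm hst)]
    exact T.d_rel cs hs hm htS (Ne.symm hst)
  · by_cases hta : t = a
    · subst hta
      rw [newM_a' hsa, newGen_a, newGen_ne hsa]
      exact pow_swap (T.d_sq cs hs hm) (sq cs hs hsS) (T.d_rel cs hs hm hsS hsa)
    · rw [T.newM_eq hsS hsa hta, newGen_ne hsa, newGen_ne hta]
      exact rel cs hs hm hsS htS

lemma dRel : DRelations (2 * q) g (a * g 0 * a) := by
  have h := T.dRelations _ (T.newGen_rel cs hs hm)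
  rwa [T.newGen_comp, newGen_a] at h

/-- Conjugation by `a` exchanges `g 0` and `d = aba`. -/
lemma commute_a_flipProd :
    Commute a (flipProd g (a * g 0 * a) (2 * q)) := by
  have ha := sq cs hs T.mem_aS
  apply commute_flipProd_of_swap
  · rw [mul_assoc, ha, mul_one]
  · rw [mul_assoc a, ← mul_assoc a a, ha, one_mul]
  · exact (T.dRel cs hs hm).comm_zero
  · intro j h1 h2
    exact commute_of_two cs hs hm T.mem_aS (T.mem_gS j) (T.m_a_far j h1 h2)

omit T hs hm in
/-- The central involution of `⟨B⟩`. -/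
def center (q : ℕ) (a : W) (g : ℕ → W) : W := a * flipProd g (a * g 0 * a) (2 * q)

lemma flipProd_sq : flipProd g (a * g 0 * a) (2 * q) * flipProd g (a * g 0 * a) (2 * q) = 1 :=
  (T.dRel cs hs hm).flipProd_sq le_rfl

lemma center_commute_a : Commute (center q a g) a :=
  ((Commute.refl a).mul_left (T.commute_a_flipProd cs hs hm).symm)

lemma center_mul_g_zero : Commute (center q a g) (g 0) := by
  have ha := sq cs hs T.mem_aS
  have h1 := (T.dRel cs hs hm).flipProd_mul_mul rfl
  have h2 := T.flipProd_sq cs hs hm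
  change a * flipProd g (a * g 0 * a) (2 * q) * g 0 =
    g 0 * (a * flipProd g (a * g 0 * a) (2 * q))
  have h3 : ∀ u : W, u * u = 1 → u * g 0 * u = a * g 0 * a → a * u * g 0 = g 0 * (a * u) := by
    intro u hu hug
    calc a * u * g 0 = a * (u * g 0 * u) * u := by
          simp only [mul_assoc, hu, mul_one]
      _ = (a * a) * g 0 * (a * u) := by rw [hug]; simp only [mul_assoc]
      _ = _ := by rw [ha, one_mul]
  exact h3 _ h2 h1

lemma center_commute {x : W} (hx : x ∈ B) : Commute (center q a g) x := by
  by_cases hxa : x = a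
  · rw [hxa]
    exact T.center_commute_a cs hs hm
  · obtain ⟨j, hj, rfl⟩ := T.exists_g x hx hxa
    rcases Nat.eq_zero_or_pos j with rfl | hj0
    · exact T.center_mul_g_zero cs hs hm
    · have h1 : Commute a (g j) :=
        commute_of_two cs hs hm T.mem_aS (T.mem_gS j) (T.m_a_far j hj0 hj)
      exact h1.mul_left ((T.dRel cs hs hm).commute_flipProd hj0 hj le_rfl).symm

lemma center_commute_closure {x : W} (hx : x ∈ Subgroup.closure B) :
    Commute (center q a g) x := by
  induction hx using Subgroup.closure_induction with
  | mem x hx => exact T.center_commute cs hs hm hx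
  | one => exact Commute.one_right _
  | mul x y _ _ h1 h2 => exact h1.mul_right h2
  | inv x _ h => exact h.inv_right

lemma center_sq : center q a g * center q a g = 1 := by
  have ha := sq cs hs T.mem_aS
  have hu := T.flipProd_sq cs hs hm
  have hc := (T.commute_a_flipProd cs hs hm).eq
  unfold center
  revert hu hc
  generalize flipProd g (a * g 0 * a) (2 * q) = u
  intro hu hc
  rw [mul_assoc, ← mul_assoc u, ← hc, mul_assoc a u, hu, mul_one, ha]

omit hs hm in
lemma flipProd_mem_closure :
    flipProd g (a * g 0 * a) (2 * q) ∈ Subgroup.closure (B \ {a} ∪ {a * g 0 * a}) :=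
  flipProd_mem (fun j _ => Subgroup.subset_closure (Or.inl ⟨T.mem_g j, T.ne_a j⟩))
    (Subgroup.subset_closure (Or.inr rfl))

omit hs hm in
lemma closure_new_le :
    Subgroup.closure (B \ {a} ∪ {a * g 0 * a}) ≤ Subgroup.closure B := by
  rw [Subgroup.closure_le]
  have ha := Subgroup.subset_closure (k := B) T.mem_a
  rintro x (hx | rfl)
  · exact Subgroup.subset_closure hx.1
  · exact Subgroup.mul_mem _ (Subgroup.mul_mem _ ha (Subgroup.subset_closure (T.mem_g 0))) ha

omit hs hm in
lemma center_mem : center q a g ∈ Subgroup.closure B :=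
  Subgroup.mul_mem _ (Subgroup.subset_closure T.mem_a) (T.closure_new_le T.flipProd_mem_closure)

/-- The character of `W` sending `a` to `-1` and the other generators to `1` sends the central
involution to `-1`: the relations `m a t` with `t ≠ a` are even or infinite. -/
lemma center_ne_one : center q a g ≠ 1 := by
  classical
  let f : S → ℤˣ := fun s => if (s : W) = a then -1 else 1
  have hf : cm.IsLiftable f := by
    have hfsq : ∀ s, f s * f s = 1 := by
      intro s
      simp only [f]
      split_ifs <;> rfl
    have haux : ∀ t : W, t ∈ S → t ≠ a → Even (m a t) := by
      intro t ht hta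
      by_cases htB : t ∈ B
      · obtain ⟨j, hj, rfl⟩ := T.exists_g t htB hta
        rcases Nat.eq_zero_or_pos j with rfl | hj0
        · rw [T.m_a_zero]; decide
        · rw [T.m_a_far j hj0 hj]; decide
      · rcases T.m_a_outside ht htB with h | h <;> rw [h] <;> decide
    rintro ⟨s, hsS⟩ ⟨t, htS⟩
    rw [hm]
    by_cases hsa : s = a
    · by_cases hta : t = a
      · subst hsa hta
        rw [hfsq, one_pow]
      · subst hsa
        have : f ⟨s, hsS⟩ * f ⟨t, htS⟩ = -1 := by simp [f, hta]
        rw [this]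
        exact (haux t htS hta).neg_one_pow
    · by_cases hta : t = a
      · subst hta
        have : f ⟨s, hsS⟩ * f ⟨t, htS⟩ = -1 := by simp [f, hsa]
        rw [this]
        change _ ^ m s t = _
        rw [T.symm s hsS t htS]
        exact (haux s hsS hsa).neg_one_pow
      · have : f ⟨s, hsS⟩ * f ⟨t, htS⟩ = 1 := by simp [f, hsa, hta]
        rw [this, one_pow]
  let χ := cs.lift ⟨f, hf⟩
  have hχ : ∀ s (hsS : s ∈ S), χ s = if s = a then -1 else 1 := by
    intro s hsS
    have h := cs.lift_apply_simple hf ⟨s, hsS⟩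
    rwa [hs] at h
  have hχa : χ a = -1 := by rw [hχ a T.mem_aS, if_pos rfl]
  have hχg : ∀ j, χ (g j) = 1 := fun j => by rw [hχ _ (T.mem_gS j), if_neg (T.ne_a j)]
  have hu : flipProd g (a * g 0 * a) (2 * q) ∈ χ.ker := by
    apply flipProd_mem
    · intro j _
      exact hχg j
    · rw [MonoidHom.mem_ker, map_mul, map_mul, hχa, hχg]
      rfl
  intro h
  have h1 := congrArg χ h
  rw [center, map_mul, (MonoidHom.mem_ker).mp hu, hχa, map_one] at h1
  revert h1
  decide

/-- All generators of `B` other than `a` are conjugate to `g 0` along the chain of labels `3`. -/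
lemma exists_conj {j : ℕ} (hj : j < 2 * q) :
    ∃ x ∈ Subgroup.closure B, g j = x * g 0 * x⁻¹ := by
  induction j with
  | zero => exact ⟨1, Subgroup.one_mem _, by simp⟩
  | succ j ih =>
    obtain ⟨x, hx, hxj⟩ := ih (by omega)
    have h1 := (T.dRel cs hs hm).braid j hj
    have hgj := sq cs hs (T.mem_gS j)
    have hm1 := Subgroup.subset_closure (k := B) (T.mem_g j)
    have hm2 := Subgroup.subset_closure (k := B) (T.mem_g (j + 1))
    refine ⟨g j * g (j + 1) * x, Subgroup.mul_mem _ (Subgroup.mul_mem _ hm1 hm2) hx, ?_⟩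
    have h2 : g j * g (j + 1) * x * g 0 * (g j * g (j + 1) * x)⁻¹ =
        g j * g (j + 1) * (x * g 0 * x⁻¹) * (g j * g (j + 1))⁻¹ := by group
    rw [h2, ← hxj, h1, mul_assoc _ _ (g (j + 1)), mul_inv_rev]
    rw [inv_eq_of_mul_eq_one_left hgj, inv_eq_of_mul_eq_one_left (sq cs hs (T.mem_gS (j + 1)))]
    have h3 := (T.dRel cs hs hm).cancel hj
    have h4 := (T.dRel cs hs hm).cancel (show j < 2 * q by omega)
    simp only [mul_assoc, h3, hgj, mul_one]

lemma longest_eq_center {z : W} (hz : IsLongestElement B z) : z = center q a g := by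
  have hB : ∀ x ∈ B, ∃ i, x = cs.simple i := fun x hx => ⟨⟨x, T.subset hx⟩, (hs ⟨x, T.subset hx⟩).symm⟩
  apply longest_eq_of_central cs hB T.mem_a (T.mem_g 0) (T.braid_four cs hs hm) _ _ T.center_mem _
    (T.center_ne_one cs hs hm) (T.center_sq cs hs hm) hz
  · exact not_commute cs hs hm T.mem_aS (T.mem_gS 0) (by rw [T.m_a_zero]; norm_num)
  · intro t ht hta
    obtain ⟨j, hj, rfl⟩ := T.exists_g t ht hta
    exact T.exists_conj cs hs hm hj
  · intro x hx
    exact (T.center_commute_closure cs hs hm hx).eq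

end Setup

end COdd
/-! ### The new Coxeter system -/

namespace COdd

namespace Setup

variable {m : W → W → ℕ} {S B : Set W} {q : ℕ} {a : W} {g : ℕ → W} (T : Setup m S B q a g)
  {cm : CoxeterMatrix S} (cs : CoxeterSystem cm W) (hs : ∀ s : S, cs.simple s = (s : W))
  (hm : ∀ s t : S, cm.M s t = m s t)

/-- The new generators, indexed by `Option S`. -/
noncomputable def newSimple (q : ℕ) (a : W) (g : ℕ → W) : Option S → W
  | none => center q a g
  | some s => newGen a (g 0) s

include hs hm

lemma commute_outside {t x : W} (ht : t ∈ S) (htB : t ∉ B) (h : m a t = 2)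
    (hx : x ∈ Subgroup.closure B) (T : Setup m S B q a g) : Commute x t := by
  induction hx using Subgroup.closure_induction with
  | mem x hx =>
    exact commute_of_two cs hs hm (T.subset hx) ht (T.m_outside ht htB hx (by omega))
  | one => exact Commute.one_left _
  | mul x y _ _ h1 h2 => exact h1.mul_left h2
  | inv x _ h => exact h.inv_left

include T

lemma newGen_mem_closure {t : W} (htB : t ∈ B) : newGen a (g 0) t ∈ Subgroup.closure B := by
  by_cases h : t = a
  · subst h
    rw [newGen_a]
    exact T.closure_new_le (Subgroup.subset_closure (Or.inr rfl))
  · rw [newGen_ne h]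
    exact Subgroup.subset_closure htB

/-- For `t ∈ B` this is the centrality of `z`; a generator outside `B` which is related to `a` commutes
with all of `⟨B⟩`, hence with `z`. -/
lemma center_rel {t : W} (ht : t ∈ S) :
    (center q a g * newGen a (g 0) t) ^ orderZ m B a t = 1 := by
  have hz := T.center_sq cs hs hm
  have ht2 := T.newGen_sq cs hs hm ht
  by_cases htB : t ∈ B
  · rw [orderZ_mem htB]
    exact pow_two_of_commute hz ht2
      (T.center_commute_closure cs hs hm (T.newGen_mem_closure cs hs hm htB)).eq
  · rw [orderZ_outside htB]
    rcases T.m_a_outside ht htB with h | h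
    · rw [h, pow_zero]
    · rw [h]
      have hta : t ≠ a := fun h' => htB (h' ▸ T.mem_a)
      rw [newGen_ne hta] at ht2 ⊢
      exact pow_two_of_commute hz ht2 (commute_outside cs hs hm ht htB h T.center_mem T).eq

lemma newSimple_isLiftable : T.matrix.IsLiftable (newSimple q a g) := by
  rintro (_ | ⟨s, hsS⟩) (_ | ⟨t, htS⟩)
  · change (center q a g * center q a g) ^ 1 = 1
    rw [T.center_sq cs hs hm, one_pow]
  · exact T.center_rel cs hs hm htS
  · exact pow_swap (T.center_sq cs hs hm) (T.newGen_sq cs hs hm hsS) (T.center_rel cs hs hm hsS)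
  · exact T.newGen_rel cs hs hm s hsS t htS

omit hs hm

open scoped Classical in
/-- The generators of the abstract Coxeter group of the new matrix which are indexed by elements
of `S`. -/
noncomputable def gen (x : W) : T.matrix.Group :=
  if h : x ∈ S then T.matrix.simple (some ⟨x, h⟩) else 1

/-- The generator of the abstract Coxeter group of the new matrix which stands for the longest
element of `⟨B⟩`. -/
noncomputable def genZ : T.matrix.Group := T.matrix.simple none

lemma gen_mem {x : W} (h : x ∈ S) : T.gen x = T.matrix.simple (some ⟨x, h⟩) := dif_pos h

lemma gen_rel : ∀ s ∈ S, ∀ t ∈ S, (T.gen s * T.gen t) ^ newM m B a (g 0) s t = 1 := by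
  intro s hsS t htS
  rw [T.gen_mem hsS, T.gen_mem htS]
  exact T.matrix.toCoxeterSystem.simple_mul_simple_pow (some ⟨s, hsS⟩) (some ⟨t, htS⟩)

lemma gen_sq {s : W} (hsS : s ∈ S) : T.gen s * T.gen s = 1 := by
  have h := T.gen_rel s hsS s hsS
  rwa [newM_self, pow_one] at h

lemma genZ_sq : T.genZ * T.genZ = 1 := T.matrix.toCoxeterSystem.simple_mul_simple_self none

lemma genZ_rel {t : W} (ht : t ∈ S) : (T.genZ * T.gen t) ^ orderZ m B a t = 1 := by
  rw [T.gen_mem ht]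
  exact T.matrix.toCoxeterSystem.simple_mul_simple_pow none (some ⟨t, ht⟩)

lemma genRel : DRelations (2 * q) (T.gen ∘ g) (T.gen a) := T.dRelations _ T.gen_rel

/-- The product of flips in the abstract Coxeter group of the new matrix. -/
noncomputable def genFlip : T.matrix.Group := flipProd (T.gen ∘ g) (T.gen a) (2 * q)

lemma genFlip_sq : T.genFlip * T.genFlip = 1 := T.genRel.flipProd_sq le_rfl

lemma genZ_commute_genFlip : Commute T.genZ T.genFlip := by
  have h : ∀ t ∈ B, Commute T.genZ (T.gen t) := by
    intro t ht
    have h1 := T.genZ_rel (T.subset ht)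
    rw [orderZ_mem ht] at h1
    exact commute_of_pow_two T.genZ_sq (T.gen_sq (T.subset ht)) h1
  have h2 : T.genFlip ∈ Subgroup.centralizer {T.genZ} := by
    apply flipProd_mem
    · intro j _
      rw [Subgroup.mem_centralizer_singleton_iff]
      exact (h _ (T.mem_g j)).symm
    · rw [Subgroup.mem_centralizer_singleton_iff]
      exact (h _ T.mem_a).symm
  rw [Subgroup.mem_centralizer_singleton_iff] at h2
  exact h2.symm

/-- In the new system, a generator `t` outside `B` with `m a t = 2` commutes with the new
generators replacing those of `B`. -/
lemma gen_commute_outside {t : W} (ht : t ∈ S) (htB : t ∉ B) (h : m a t = 2) :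
    Commute (T.genZ * T.genFlip) (T.gen t) := by
  have hta : t ≠ a := fun h' => htB (h' ▸ T.mem_a)
  have h1 : Commute T.genZ (T.gen t) := by
    have h1 := T.genZ_rel ht
    rw [orderZ_outside htB, h] at h1
    exact commute_of_pow_two T.genZ_sq (T.gen_sq ht) h1
  have h2 : T.genFlip ∈ Subgroup.centralizer {T.gen t} := by
    apply flipProd_mem
    · intro j _
      rw [Subgroup.mem_centralizer_singleton_iff]
      have h3 := T.gen_rel _ (T.mem_gS j) t ht
      rw [T.newM_eq (T.mem_gS j) (T.ne_a j) hta,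
        T.m_outside ht htB (T.mem_g j) (by omega)] at h3
      exact commute_of_pow_two (T.gen_sq (T.mem_gS j)) (T.gen_sq ht) h3
    · rw [Subgroup.mem_centralizer_singleton_iff]
      have h3 := T.gen_rel _ T.mem_aS t ht
      rw [newM_a hta, T.orderD_outside htB, h] at h3
      exact commute_of_pow_two (T.gen_sq T.mem_aS) (T.gen_sq ht) h3
  rw [Subgroup.mem_centralizer_singleton_iff] at h2
  exact h1.mul_left h2

lemma genA_sq : (T.genZ * T.genFlip) * (T.genZ * T.genFlip) = 1 := by
  rw [mul_assoc, ← mul_assoc T.genFlip, ← T.genZ_commute_genFlip.eq, mul_assoc T.genZ T.genFlip,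
    T.genFlip_sq, mul_one, T.genZ_sq]

lemma genZ_commute_gen {t : W} (ht : t ∈ B) : Commute T.genZ (T.gen t) := by
  have h1 := T.genZ_rel (T.subset ht)
  rw [orderZ_mem ht] at h1
  exact commute_of_pow_two T.genZ_sq (T.gen_sq (T.subset ht)) h1

lemma genA_rel {t : W} (ht : t ∈ S) (hta : t ≠ a) :
    ((T.genZ * T.genFlip) * T.gen t) ^ m a t = 1 := by
  by_cases htB : t ∈ B
  · obtain ⟨j, hj, rfl⟩ := T.exists_g t htB hta
    rcases Nat.eq_zero_or_pos j with rfl | hj0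
    · rw [T.m_a_zero]
      have hz : Commute T.genZ (T.genFlip * T.gen (g 0)) :=
        T.genZ_commute_genFlip.mul_right (T.genZ_commute_gen htB)
      have h1 : T.genFlip * T.gen (g 0) * T.genFlip = T.gen a := T.genRel.flipProd_mul_mul rfl
      have h2 := T.gen_rel a T.mem_aS (g 0) (T.mem_gS 0)
      rw [newM_a (T.ne_a 0), orderD_zero] at h2
      have h3 : (T.genFlip * T.gen (g 0)) ^ 2 = T.gen a * T.gen (g 0) := by
        rw [pow_two, ← mul_assoc, h1]
      rw [mul_assoc, hz.mul_pow, show 4 = 2 * 2 from rfl, pow_mul, pow_mul, h3, h2, pow_two T.genZ,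
        T.genZ_sq, one_pow, one_mul]
    · rw [T.m_a_far j hj0 hj]
      have h1 : Commute T.genFlip (T.gen (g j)) := (T.genRel.commute_flipProd hj0 hj le_rfl).symm
      exact pow_two_of_commute T.genA_sq (T.gen_sq ht) ((T.genZ_commute_gen htB).mul_left h1).eq
  · rcases T.m_a_outside ht htB with h | h
    · rw [h, pow_zero]
    · rw [h]
      exact pow_two_of_commute T.genA_sq (T.gen_sq ht) (T.gen_commute_outside ht htB h).eq

open scoped Classical in
/-- The images of the old generators in the abstract Coxeter group of the new matrix: `a` is
recovered as the product of `z` and of the product of flips. -/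
noncomputable def oldSimple (s : S) : T.matrix.Group :=
  if (s : W) = a then T.genZ * T.genFlip else T.gen s

lemma oldSimple_a {h : a ∈ S} : T.oldSimple ⟨a, h⟩ = T.genZ * T.genFlip := if_pos rfl

lemma oldSimple_ne {s : W} {h : s ∈ S} (hsa : s ≠ a) : T.oldSimple ⟨s, h⟩ = T.gen s := if_neg hsa

include hm in
/-- The relations of `W` hold for the elements recovered in the abstract Coxeter group. The relation
`(ab)⁴ = 1` comes from the fact that the product of flips exchanges `b` and `d`, which commute. -/
lemma oldSimple_isLiftable : cm.IsLiftable T.oldSimple := by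
  rintro ⟨s, hsS⟩ ⟨t, htS⟩
  rw [hm]
  change _ ^ m s t = 1
  by_cases hsa : s = a
  · subst hsa
    rw [oldSimple_a]
    by_cases hta : t = s
    · subst hta
      rw [oldSimple_a, T.genA_sq, one_pow]
    · rw [T.oldSimple_ne hta]
      exact T.genA_rel htS hta
  · rw [T.oldSimple_ne hsa]
    by_cases hta : t = a
    · subst hta
      rw [oldSimple_a, T.symm s hsS t htS]
      exact pow_swap T.genA_sq (T.gen_sq hsS) (T.genA_rel hsS hsa)
    · rw [T.oldSimple_ne hta]
      have h := T.gen_rel s hsS t htS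
      rwa [T.newM_eq hsS hsa hta] at h

include hs hm

/-- The homomorphism from the abstract Coxeter group of the new matrix to `W`. -/
noncomputable def toW : T.matrix.Group →* W :=
  T.matrix.toCoxeterSystem.lift ⟨_, T.newSimple_isLiftable cs hs hm⟩

omit hs in
/-- The homomorphism from `W` to the abstract Coxeter group of the new matrix. -/
noncomputable def ofW : W →* T.matrix.Group := cs.lift ⟨_, T.oldSimple_isLiftable hm⟩

lemma toW_simple (i : Option S) : T.toW cs hs hm (T.matrix.simple i) = newSimple q a g i :=
  T.matrix.toCoxeterSystem.lift_apply_simple (T.newSimple_isLiftable cs hs hm) i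

lemma ofW_apply {s : W} (h : s ∈ S) : T.ofW cs hm s = T.oldSimple ⟨s, h⟩ := by
  have h1 := cs.lift_apply_simple (T.oldSimple_isLiftable hm) ⟨s, h⟩
  rwa [hs] at h1

lemma toW_gen {s : W} (h : s ∈ S) : T.toW cs hs hm (T.gen s) = newGen a (g 0) s := by
  rw [T.gen_mem h, toW_simple]
  rfl

lemma toW_genZ : T.toW cs hs hm T.genZ = center q a g := T.toW_simple cs hs hm none

lemma toW_genFlip : T.toW cs hs hm T.genFlip = flipProd g (a * g 0 * a) (2 * q) := by
  rw [genFlip, map_flipProd, T.toW_gen cs hs hm T.mem_aS, newGen_a]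
  congr 1
  funext j
  exact (T.toW_gen cs hs hm (T.mem_gS j)).trans (newGen_ne (T.ne_a j))

lemma ofW_a : T.ofW cs hm a = T.genZ * T.genFlip := by
  rw [T.ofW_apply cs hs hm T.mem_aS, oldSimple_a]

lemma ofW_ne {s : W} (h : s ∈ S) (hsa : s ≠ a) : T.ofW cs hm s = T.gen s := by
  rw [T.ofW_apply cs hs hm h, T.oldSimple_ne hsa]

lemma ofW_d : T.ofW cs hm (a * g 0 * a) = T.gen a := by
  have h1 : T.genFlip * T.gen (g 0) * T.genFlip = T.gen a := T.genRel.flipProd_mul_mul rfl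
  have h2 := T.genZ_commute_genFlip.eq
  have h3 := (T.genZ_commute_gen (T.mem_g 0)).eq
  rw [map_mul, map_mul, T.ofW_a cs hs hm, T.ofW_ne cs hs hm (T.mem_gS 0) (T.ne_a 0)]
  calc T.genZ * T.genFlip * T.gen (g 0) * (T.genZ * T.genFlip)
      = T.genZ * T.genFlip * (T.gen (g 0) * T.genZ) * T.genFlip := by simp only [mul_assoc]
    _ = T.genZ * (T.genFlip * T.genZ) * T.gen (g 0) * T.genFlip := by
        rw [← h3]; simp only [mul_assoc]
    _ = (T.genZ * T.genZ) * (T.genFlip * T.gen (g 0) * T.genFlip) := by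
        rw [← h2]; simp only [mul_assoc]
    _ = T.gen a := by rw [h1, T.genZ_sq, one_mul]

lemma ofW_newGen {s : W} (h : s ∈ S) : T.ofW cs hm (newGen a (g 0) s) = T.gen s := by
  by_cases hsa : s = a
  · subst hsa
    rw [newGen_a, T.ofW_d cs hs hm]
  · rw [newGen_ne hsa, T.ofW_ne cs hs hm h hsa]

lemma ofW_center : T.ofW cs hm (center q a g) = T.genZ := by
  have h : T.ofW cs hm (flipProd g (a * g 0 * a) (2 * q)) = T.genFlip := by
    rw [map_flipProd, T.ofW_d cs hs hm, genFlip]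
    congr 1
    funext j
    exact T.ofW_ne cs hs hm (T.mem_gS j) (T.ne_a j)
  rw [center, map_mul, h, T.ofW_a cs hs hm, mul_assoc, T.genFlip_sq, mul_one]

lemma ofW_comp_toW : (T.ofW cs hm).comp (T.toW cs hs hm) = MonoidHom.id _ := by
  apply T.matrix.toCoxeterSystem.ext_simple
  rintro (_ | ⟨s, hsS⟩)
  · change T.ofW cs hm (T.toW cs hs hm (T.matrix.simple none)) = T.matrix.simple none
    rw [toW_simple]
    exact T.ofW_center cs hs hm
  · change T.ofW cs hm (T.toW cs hs hm (T.matrix.simple (some ⟨s, hsS⟩))) =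
      T.matrix.simple (some ⟨s, hsS⟩)
    rw [toW_simple, ← T.gen_mem hsS]
    exact T.ofW_newGen cs hs hm hsS

lemma toW_comp_ofW : (T.toW cs hs hm).comp (T.ofW cs hm) = MonoidHom.id _ := by
  apply cs.ext_simple
  rintro ⟨s, hsS⟩
  rw [hs]
  change T.toW cs hs hm (T.ofW cs hm s) = s
  by_cases hsa : s = a
  · subst hsa
    rw [T.ofW_a cs hs hm, map_mul, T.toW_genZ, T.toW_genFlip, center, mul_assoc,
      T.flipProd_sq cs hs hm, mul_one]
  · rw [T.ofW_ne cs hs hm hsS hsa, T.toW_gen cs hs hm hsS, newGen_ne hsa]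

/-- The new Coxeter system. -/
noncomputable def newSystem : CoxeterSystem T.matrix W :=
  ⟨MonoidHom.toMulEquiv (T.ofW cs hm) (T.toW cs hs hm)
    (T.toW_comp_ofW cs hs hm) (T.ofW_comp_toW cs hs hm)⟩

lemma newSystem_simple (i : Option S) : (T.newSystem cs hs hm).simple i = newSimple q a g i :=
  T.toW_simple cs hs hm i

end Setup

end COdd
/-! ### The base of the new system -/

namespace COdd

/-- A path leaving a set contains an edge leaving this set. -/
lemma exists_edge {α : Type*} {r : α → α → Prop} {A : Set α} {u v : α}
    (h : Relation.ReflTransGen r u v) (hu : u ∈ A) (hv : v ∉ A) :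
    ∃ x ∈ A, ∃ y, y ∉ A ∧ r x y := by
  induction h with
  | refl => exact absurd hu hv
  | @tail x y _ hxy ih =>
    by_cases hx : x ∈ A
    · exact ⟨x, hx, y, hv, hxy⟩
    · exact ih hx

lemma reflTransGen_swap {α : Type*} {r : α → α → Prop} (hr : ∀ x y, r x y → r y x) {u v : α}
    (h : Relation.ReflTransGen r u v) : Relation.ReflTransGen r v u := by
  induction h with
  | refl => exact Relation.ReflTransGen.refl
  | tail _ hxy ih => exact Relation.ReflTransGen.head (hr _ _ hxy) ih

namespace Setup

variable {m : W → W → ℕ} {S B : Set W} {q : ℕ} {a : W} {g : ℕ → W} (T : Setup m S B q a g)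
  {cm : CoxeterMatrix S} (cs : CoxeterSystem cm W) (hs : ∀ s : S, cs.simple s = (s : W))
  (hm : ∀ s t : S, cm.M s t = m s t)

include T

/-- The new Coxeter matrix, as a function on `W`. -/
noncomputable def newm (x y : W) : ℕ :=
  T.matrix (Function.invFun (newSimple q a g) x) (Function.invFun (newSimple (S := S) q a g) y)

include hs hm

lemma newSimple_injective : Function.Injective (newSimple (S := S) q a g) := by
  have h := simple_injective (T.newSystem cs hs hm)
  have h1 : (T.newSystem cs hs hm).simple = newSimple q a g :=
    funext (T.newSystem_simple cs hs hm)
  rwa [h1] at h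

lemma newm_apply (i j : Option S) :
    T.newm (newSimple q a g i) (newSimple q a g j) = T.matrix i j := by
  rw [newm, Function.leftInverse_invFun (T.newSimple_injective cs hs hm),
    Function.leftInverse_invFun (T.newSimple_injective cs hs hm)]

lemma newm_newGen {s t : W} (hsS : s ∈ S) (htS : t ∈ S) :
    T.newm (newGen a (g 0) s) (newGen a (g 0) t) = newM m B a (g 0) s t :=
  T.newm_apply cs hs hm (some ⟨s, hsS⟩) (some ⟨t, htS⟩)

lemma newm_center {t : W} (htS : t ∈ S) :
    T.newm (center q a g) (newGen a (g 0) t) = orderZ m B a t :=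
  T.newm_apply cs hs hm none (some ⟨t, htS⟩)

lemma newm_center' {t : W} (htS : t ∈ S) :
    T.newm (newGen a (g 0) t) (center q a g) = orderZ m B a t :=
  T.newm_apply cs hs hm (some ⟨t, htS⟩) none

omit hs hm in
lemma image_newGen {A : Set W} (haA : a ∈ A) :
    newGen a (g 0) '' A = A \ {a} ∪ {a * g 0 * a} := by
  ext x
  constructor
  · rintro ⟨s, hsA, rfl⟩
    by_cases hsa : s = a
    · subst hsa
      rw [newGen_a]
      exact Or.inr rfl
    · rw [newGen_ne hsa]
      exact Or.inl ⟨hsA, hsa⟩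
  · rintro (hx | rfl)
    · exact ⟨x, hx.1, newGen_ne hx.2⟩
    · exact ⟨a, haA, newGen_a _⟩

omit hs hm in
lemma range_newSimple :
    Set.range (newSimple (S := S) q a g) = S \ {a} ∪ {a * g 0 * a, center q a g} := by
  have h : Set.range (newSimple (S := S) q a g) = newGen a (g 0) '' S ∪ {center q a g} := by
    ext x
    constructor
    · rintro ⟨(_ | s), rfl⟩
      · exact Or.inr rfl
      · exact Or.inl ⟨s, s.2, rfl⟩
    · rintro (⟨s, hsS, rfl⟩ | rfl)
      · exact ⟨some ⟨s, hsS⟩, rfl⟩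
      · exact ⟨none, rfl⟩
  rw [h, T.image_newGen T.mem_aS, Set.union_assoc]
  rfl

/-- The new generators form a set of Coxeter generators. -/
lemma isCoxeterSystemOn :
    IsCoxeterSystemOn T.newm (S \ {a} ∪ {a * g 0 * a, center q a g}) := by
  rw [← T.range_newSimple]
  let e := Equiv.ofInjective _ (T.newSimple_injective cs hs hm)
  have he : ∀ s, newSimple q a g (e.symm s) = s :=
    fun s => congrArg Subtype.val (e.apply_symm_apply s)
  refine ⟨T.matrix.reindex e, (T.newSystem cs hs hm).reindex e, ?_, ?_⟩
  · intro s
    rw [CoxeterSystem.reindex_simple, newSystem_simple]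
    exact he s
  · intro s t
    have h := T.newm_apply cs hs hm (e.symm s) (e.symm t)
    rw [he, he] at h
    rw [h]
    rfl

lemma newGen_injOn : Set.InjOn (newGen a (g 0)) S := by
  intro s hsS t htS h
  have h1 := T.newSimple_injective cs hs hm (a₁ := some ⟨s, hsS⟩) (a₂ := some ⟨t, htS⟩) h
  simpa using h1

/-- The base of the new system has the type obtained by transporting the new matrix. -/
lemma hasType {n : ℕ} {std : Fin n → Fin n → ℕ} (e : B ≃ Fin n)
    (h : ∀ i j, newM m B a (g 0) (e.symm i) (e.symm j) = std i j) :
    HasType T.newm (B \ {a} ∪ {a * g 0 * a}) std := by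
  rw [← T.image_newGen T.mem_a]
  have hinj := (T.newGen_injOn cs hs hm).mono T.subset
  let f := (Equiv.Set.imageOfInjOn (newGen a (g 0)) B hinj)
  refine ⟨f.symm.trans e, ?_⟩
  intro u v
  obtain ⟨u, rfl⟩ := f.surjective u
  obtain ⟨v, rfl⟩ := f.surjective v
  have h1 := h (e u) (e v)
  rw [e.symm_apply_apply, e.symm_apply_apply] at h1
  simp only [Equiv.trans_apply, Equiv.symm_apply_apply]
  rw [← h1]
  exact T.newm_newGen cs hs hm (T.subset u.2) (T.subset v.2)

/-- The diagram of the new base is connected: all its vertices are joined to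
`newGen a (g 0) (g 0) = g 0` by paths. -/
lemma isIrreducibleOn : IsIrreducibleOn T.newm (B \ {a} ∪ {a * g 0 * a}) := by
  rw [← T.image_newGen T.mem_a]
  refine ⟨⟨_, a, T.mem_a, rfl⟩, ?_⟩
  set r : W → W → Prop := fun x y => x ∈ newGen a (g 0) '' B ∧ y ∈ newGen a (g 0) '' B ∧ x ≠ y ∧
    (T.newm x y = 0 ∨ 2 < T.newm x y) with hr
  have hsymm : ∀ x y, r x y → r y x := by
    rintro _ _ ⟨⟨s, hsB, rfl⟩, ⟨t, htB, rfl⟩, hne, h⟩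
    refine ⟨⟨t, htB, rfl⟩, ⟨s, hsB, rfl⟩, hne.symm, ?_⟩
    rw [T.newm_newGen cs hs hm (T.subset htB) (T.subset hsB),
      T.newM_symm (T.subset htB) (T.subset hsB),
      ← T.newm_newGen cs hs hm (T.subset hsB) (T.subset htB)]
    exact h
  have hedge : ∀ s ∈ B, ∀ t ∈ B, s ≠ t → newM m B a (g 0) s t = 3 →
      r (newGen a (g 0) s) (newGen a (g 0) t) := by
    intro s hsB t htB hst h
    refine ⟨⟨s, hsB, rfl⟩, ⟨t, htB, rfl⟩, ?_, ?_⟩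
    · exact fun h' => hst (T.newGen_injOn cs hs hm (T.subset hsB) (T.subset htB) h')
    · rw [T.newm_newGen cs hs hm (T.subset hsB) (T.subset htB), h]
      right
      norm_num
  have hchain : ∀ j, j < 2 * q →
      Relation.ReflTransGen r (newGen a (g 0) (g 0)) (newGen a (g 0) (g j)) := by
    intro j
    induction j with
    | zero => exact fun _ => Relation.ReflTransGen.refl
    | succ j ih =>
      intro hj
      refine (ih (by omega)).tail (hedge _ (T.mem_g j) _ (T.mem_g (j + 1)) ?_ ?_)
      · exact T.g_ne (by omega) hj (by omega)
      · rw [T.newM_eq (T.mem_gS j) (T.ne_a j) (T.ne_a _), T.m_succ j hj]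
  have hall : ∀ x ∈ newGen a (g 0) '' B, Relation.ReflTransGen r (newGen a (g 0) (g 0)) x := by
    rintro _ ⟨s, hsB, rfl⟩
    by_cases hsa : s = a
    · subst hsa
      refine (hchain 1 T.one_lt).tail (hsymm _ _ (hedge _ T.mem_a _ (T.mem_g 1) (T.ne_a 1).symm ?_))
      rw [newM_a (T.ne_a 1), T.orderD_one]
    · obtain ⟨j, hj, rfl⟩ := T.exists_g s hsB hsa
      exact hchain j hj
  intro u hu v hv
  exact (reflTransGen_swap hsymm (hall u hu)).trans (hall v hv)

/-- An irreducible set of new generators which contains the new base properly generates an infinite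
group: an edge leaving the base leads to a generator `t` without relation to `d = aba`, or is itself
labelled by `∞`. -/
lemma maximal (A : Set W) (hA : A ⊆ S \ {a} ∪ {a * g 0 * a, center q a g})
    (hBA : B \ {a} ∪ {a * g 0 * a} ⊆ A) (hirr : IsIrreducibleOn T.newm A)
    (hfin : (Subgroup.closure A : Set W).Finite) : A = B \ {a} ∪ {a * g 0 * a} := by
  rw [← T.range_newSimple] at hA
  rw [← T.image_newGen T.mem_a] at hBA ⊢
  refine Set.Subset.antisymm ?_ hBA
  by_contra hcon
  obtain ⟨v, hvA, hv⟩ := Set.not_subset.mp hcon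
  have hu : newGen a (g 0) a ∈ newGen a (g 0) '' B := ⟨a, T.mem_a, rfl⟩
  obtain ⟨_, ⟨s, hsB, rfl⟩, y, hyB, hsA, hyA, -, hy⟩ :=
    exists_edge (hirr.2 _ (hBA hu) _ hvA) hu hv
  have hinf : ∀ i j : Option S, newSimple q a g i ∈ A → newSimple q a g j ∈ A →
      T.newm (newSimple q a g i) (newSimple q a g j) ≠ 0 := by
    intro i j hi hj h
    rw [T.newm_apply cs hs hm] at h
    refine infinite_of_matrix_eq_zero (T.newSystem cs hs hm) h (Subgroup.closure A) ?_ ?_ hfin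
    · rw [newSystem_simple]; exact Subgroup.subset_closure hi
    · rw [newSystem_simple]; exact Subgroup.subset_closure hj
  obtain ⟨i, rfl⟩ := hA hyA
  have hsS := T.subset hsB
  rcases hy with hy | hy
  · exact hinf (some ⟨s, hsS⟩) i hsA hyA hy
  · rcases i with _ | ⟨t, htS⟩
    · change 2 < T.newm (newGen a (g 0) s) (center q a g) at hy
      rw [T.newm_center' cs hs hm hsS, orderZ_mem hsB] at hy
      exact lt_irrefl _ hy
    · have htB : t ∉ B := fun h => hyB ⟨t, h, rfl⟩
      have hta : t ≠ a := fun h => htB (h ▸ T.mem_a)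
      have h0 : m a t ≠ 0 := by
        intro h0
        apply hinf (some ⟨a, T.mem_aS⟩) (some ⟨t, htS⟩) (hBA hu) hyA
        change T.newm (newGen a (g 0) a) (newGen a (g 0) t) = 0
        rw [T.newm_newGen cs hs hm T.mem_aS htS, newM_a hta, T.orderD_outside htB, h0]
      change 2 < T.newm (newGen a (g 0) s) (newGen a (g 0) t) at hy
      rw [T.newm_newGen cs hs hm hsS htS] at hy
      have h2 : newM m B a (g 0) s t = 2 := by
        by_cases hsa : s = a
        · subst hsa
          rw [newM_a hta, T.orderD_outside htB]
          exact T.m_outside htS htB T.mem_a h0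
        · rw [T.newM_eq hsS hsa hta]
          exact T.m_outside htS htB hsB h0
      omega

lemma isBase (hfin : (Subgroup.closure B : Set W).Finite) :
    IsBase T.newm (S \ {a} ∪ {a * g 0 * a, center q a g}) (B \ {a} ∪ {a * g 0 * a}) := by
  refine ⟨?_, T.isIrreducibleOn cs hs hm, hfin.subset T.closure_new_le, ?_, T.maximal cs hs hm⟩
  · rintro x (hx | rfl)
    · exact Or.inl ⟨T.subset hx.1, hx.2⟩
    · exact Or.inr (Or.inl rfl)
  · intro hcyc
    have hmem : ∀ j, g j ∈ Subgroup.closure (B \ {a} ∪ {a * g 0 * a}) :=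
      fun j => Subgroup.subset_closure (Or.inl ⟨T.mem_g j, T.ne_a j⟩)
    have hcomm := hcyc.commGroup.mul_comm ⟨g 0, hmem 0⟩ ⟨g 1, hmem 1⟩
    refine not_commute cs hs hm (T.mem_gS 0) (T.mem_gS 1) (T.m_succ 0 T.one_lt).ge ?_
    exact congrArg Subtype.val hcomm

/-- `⟨B⟩` is generated by `⟨B'⟩` and its central element `z`. -/
lemma mem_or_center_mul_mem {x : W} (hx : x ∈ Subgroup.closure B) :
    x ∈ Subgroup.closure (B \ {a} ∪ {a * g 0 * a}) ∨
      center q a g * x ∈ Subgroup.closure (B \ {a} ∪ {a * g 0 * a}) := by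
  have hz := T.center_sq cs hs hm
  have hcomm := fun {x : W} => T.center_commute_closure cs hs hm (x := x)
  have hza : center q a g * a ∈ Subgroup.closure (B \ {a} ∪ {a * g 0 * a}) := by
    have h : center q a g * a = flipProd g (a * g 0 * a) (2 * q) := by
      have h1 := (T.commute_a_flipProd cs hs hm).eq
      have h2 := sq cs hs T.mem_aS
      rw [center, h1, mul_assoc, h2, mul_one]
    rw [h]
    exact T.flipProd_mem_closure
  have hgen : ∀ x ∈ B, x ≠ a → x ∈ Subgroup.closure (B \ {a} ∪ {a * g 0 * a}) :=
    fun x hx hxa => Subgroup.subset_closure (Or.inl ⟨hx, hxa⟩)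
  generalize Subgroup.closure (B \ {a} ∪ {a * g 0 * a}) = K at hza hgen ⊢
  generalize center q a g = z at hz hcomm hza ⊢
  induction hx using Subgroup.closure_induction with
  | mem x hx =>
    by_cases hxa : x = a
    · exact Or.inr (hxa ▸ hza)
    · exact Or.inl (hgen x hx hxa)
  | one => exact Or.inl K.one_mem
  | mul x y hx hy ihx ihy =>
    have hcx := (hcomm hx).eq
    rcases ihx with h1 | h1 <;> rcases ihy with h2 | h2
    · exact Or.inl (K.mul_mem h1 h2)
    · right
      rw [← mul_assoc, hcx, mul_assoc]
      exact K.mul_mem h1 h2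
    · right
      rw [← mul_assoc]
      exact K.mul_mem h1 h2
    · left
      have h3 := K.mul_mem h1 h2
      rwa [hcx, mul_assoc, ← mul_assoc z, hz, one_mul] at h3
  | inv x hx ih =>
    rcases ih with h | h
    · exact Or.inl (K.inv_mem h)
    · right
      have h3 := K.inv_mem h
      rwa [mul_inv_rev, inv_eq_of_mul_eq_one_left hz, ← ((hcomm hx).inv_right).eq] at h3

open scoped commutatorElement in
/-- The groups `⟨B⟩` and `⟨B'⟩` have the same commutator subgroup, because they differ by the central
factor `z` only. -/
lemma commutator_eq :
    (⁅Subgroup.closure B, Subgroup.closure B⁆ : Subgroup W) =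
      ⁅Subgroup.closure (B \ {a} ∪ {a * g 0 * a}),
        Subgroup.closure (B \ {a} ∪ {a * g 0 * a})⁆ := by
  apply le_antisymm
  · rw [Subgroup.commutator_le]
    intro x hx y hy
    have hcx : ⁅center q a g * x, y⁆ = ⁅x, y⁆ := by
      have h := (T.center_commute_closure cs hs hm
        (Subgroup.mul_mem _ (Subgroup.mul_mem _ hx hy) (Subgroup.inv_mem _ hx))).eq
      rw [commutatorElement_def, commutatorElement_def, mul_inv_rev]
      calc center q a g * x * y * (x⁻¹ * (center q a g)⁻¹) * y⁻¹
          = (center q a g * (x * y * x⁻¹)) * (center q a g)⁻¹ * y⁻¹ := by simp only [mul_assoc]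
        _ = _ := by rw [h, mul_inv_cancel_right]
    have hcy : ∀ x ∈ Subgroup.closure B, ⁅x, center q a g * y⁆ = ⁅x, y⁆ := by
      intro x hx
      have h := (T.center_commute_closure cs hs hm hx).eq
      have h' := (T.center_commute_closure cs hs hm
        (Subgroup.mul_mem _ (Subgroup.mul_mem _ (Subgroup.mul_mem _ hx hy)
          (Subgroup.inv_mem _ hx)) (Subgroup.inv_mem _ hy))).eq
      rw [commutatorElement_def, commutatorElement_def, mul_inv_rev]
      calc x * (center q a g * y) * x⁻¹ * (y⁻¹ * (center q a g)⁻¹)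
          = (x * center q a g) * y * x⁻¹ * y⁻¹ * (center q a g)⁻¹ := by simp only [mul_assoc]
        _ = center q a g * (x * y * x⁻¹ * y⁻¹) * (center q a g)⁻¹ := by
            rw [← h]; simp only [mul_assoc]
        _ = _ := by rw [h', mul_inv_cancel_right]
    have hzx := Subgroup.mul_mem _ T.center_mem hx
    rcases T.mem_or_center_mul_mem cs hs hm hx with h1 | h1 <;>
      rcases T.mem_or_center_mul_mem cs hs hm hy with h2 | h2
    · exact Subgroup.commutator_mem_commutator h1 h2
    · rw [← hcy x hx]
      exact Subgroup.commutator_mem_commutator h1 h2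
    · rw [← hcx]
      exact Subgroup.commutator_mem_commutator h1 h2
    · rw [← hcx, ← hcy _ hzx]
      exact Subgroup.commutator_mem_commutator h1 h2
  · exact Subgroup.commutator_mono T.closure_new_le T.closure_new_le

lemma matches_new : Matches B (B \ {a} ∪ {a * g 0 * a}) := by
  refine ⟨1, ?_⟩
  rw [← T.commutator_eq cs hs hm]
  have h : (MulAut.conj (1 : W)).toMonoidHom = MonoidHom.id W := by
    ext x
    simp
  rw [h, Subgroup.map_id]

lemma newm_center_mem {t : W} (ht : t ∈ B \ {a} ∪ {a * g 0 * a}) :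
    T.newm (center q a g) t = 2 := by
  rw [← T.image_newGen T.mem_a] at ht
  obtain ⟨s, hsB, rfl⟩ := ht
  rw [T.newm_center cs hs hm (T.subset hsB), orderZ_mem hsB]

lemma newm_outside {s t : W} (hsS : s ∈ S) (hsB : s ∉ B)
    (ht : t ∈ ({a * g 0 * a, center q a g} : Set W)) : T.newm s t = m s a := by
  have hsa : s ≠ a := fun h => hsB (h ▸ T.mem_a)
  rcases ht with rfl | rfl
  · have h := T.newm_newGen cs hs hm hsS T.mem_aS
    rwa [newGen_ne hsa, newGen_a, newM_a' hsa, T.orderD_outside hsB,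
      T.symm a T.mem_aS s hsS] at h
  · have h := T.newm_center' cs hs hm hsS
    rwa [newGen_ne hsa, orderZ_outside hsB, T.symm a T.mem_aS s hsS] at h

end Setup

/-- The matrix entries of type `C` are turned into those of type `B` by the construction. -/
lemma newM_eq_bMat {m : W → W → ℕ} {B : Set W} {q : ℕ} (hq : 1 ≤ q)
    (e : B ≃ Fin (2 * q + 1)) (he : ∀ u v : B, m u v = cMat (2 * q + 1) (e u) (e v))
    {a b : B} (ha : (e a : ℕ) = 2 * q) (hb : (e b : ℕ) = 2 * q - 1) (i j : Fin (2 * q + 1)) :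
    newM m B (a : W) b (e.symm i) (e.symm j) = bMat (2 * q + 1) i j := by
  have h1 : ∀ k, ((e.symm k : W) = a) ↔ (k : ℕ) = 2 * q := by
    intro k
    rw [Subtype.coe_inj, Equiv.symm_apply_eq, Fin.ext_iff, ha]
  have h2 : ∀ k, ((e.symm k : W) = b) ↔ (k : ℕ) = 2 * q - 1 := by
    intro k
    rw [Subtype.coe_inj, Equiv.symm_apply_eq, Fin.ext_iff, hb]
  have h3 : ((e.symm i : W) = e.symm j) ↔ (i : ℕ) = j := by
    rw [Subtype.coe_inj, e.symm.injective.eq_iff, Fin.ext_iff]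
  have h4 : ∀ k, orderD m B (a : W) b (e.symm k) =
      if (k : ℕ) = 2 * q - 1 then 2 else cMat (2 * q + 1) (e b) k := by
    intro k
    simp only [orderD, h2, (e.symm k).2, if_true, he, Equiv.apply_symm_apply]
  simp only [newM, h1, h3, h4, he, Equiv.apply_symm_apply, bMat, cMat, Fin.ext_iff, hb]
  have hi := i.2
  have hj := j.2
  split_ifs <;> omega

end COdd

theorem c_odd_matching_construction (m : W → W → ℕ) (S : Set W)
    (hcs : IsCoxeterSystemOn m S) (hfin : S.Finite)
    (B : Set W) (q : ℕ) (hq : 1 ≤ q)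
    (hB : IsBase m S B) (htype : HasType m B (cMat (2 * q + 1)))
    (a b c : W) (ha : a ∈ B) (hb : b ∈ B) (hc : c ∈ B)
    (hab : m a b = 4) (hbc : m b c = 3)
    (hcond : ∀ s ∈ S, s ∉ B → ∀ t ∈ B, m s a ≠ 0 → m s t = 2)
    (z : W) (hz : IsLongestElement B z) :
    ∃ m' : W → W → ℕ,
      IsCoxeterSystemOn m' ((S \ {a}) ∪ {a * b * a, z}) ∧
      IsBase m' ((S \ {a}) ∪ {a * b * a, z}) ((B \ {a}) ∪ {a * b * a}) ∧
      HasType m' ((B \ {a}) ∪ {a * b * a}) (bMat (2 * q + 1)) ∧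
      Matches B ((B \ {a}) ∪ {a * b * a}) ∧
      (∀ t ∈ (B \ {a}) ∪ {a * b * a}, m' z t = 2) ∧
      (∀ s ∈ S, s ∉ B → ∀ t ∈ ({a * b * a, z} : Set W),
        (m' s t ≠ 0 ↔ m s a ≠ 0) ∧ (m' s t ≠ 0 → m' s t = 2)) := by
  obtain ⟨cm, cs, hs, hm⟩ := hcs
  obtain ⟨e, he⟩ := htype
  -- The labels at `b` locate `a` and `b` at the last two places of the diagram.
  have hpos : (e ⟨a, ha⟩ : ℕ) = 2 * q ∧ (e ⟨b, hb⟩ : ℕ) = 2 * q - 1 := by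
    have h1 := he ⟨a, ha⟩ ⟨b, hb⟩
    have h2 := he ⟨b, hb⟩ ⟨c, hc⟩
    simp only [hab, hbc, cMat, Fin.ext_iff] at h1 h2
    have := (e ⟨a, ha⟩).2
    have := (e ⟨b, hb⟩).2
    have := (e ⟨c, hc⟩).2
    split_ifs at h1 h2 <;> omega
  obtain ⟨hea, heb⟩ := hpos
  let g : ℕ → W := fun j => e.symm ⟨2 * q - 1 - j, by omega⟩
  have hg : ∀ j, ∃ h : g j ∈ B, (e ⟨g j, h⟩ : ℕ) = 2 * q - 1 - j := fun j =>
    ⟨(e.symm ⟨2 * q - 1 - j, by omega⟩).2, by simp [g]⟩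
  have hgB : ∀ j, g j ∈ B := fun j => (hg j).1
  have hge : ∀ j, (e ⟨g j, hgB j⟩ : ℕ) = 2 * q - 1 - j := fun j => (hg j).2
  have heq : ∀ (k j : ℕ) (x y : W) (hx : x ∈ B) (hy : y ∈ B), (e ⟨x, hx⟩ : ℕ) = k →
      (e ⟨y, hy⟩ : ℕ) = j → (x = y ↔ k = j) := by
    rintro k j x y hx hy rfl rfl
    rw [← Fin.ext_iff, e.injective.eq_iff, Subtype.mk_eq_mk]
  have hmB : ∀ (x y : W) (hx : x ∈ B) (hy : y ∈ B),
      m x y = cMat (2 * q + 1) (e ⟨x, hx⟩) (e ⟨y, hy⟩) := fun x y hx hy => he ⟨x, hx⟩ ⟨y, hy⟩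
  have hb0 : g 0 = b := (heq _ _ _ _ (hgB 0) hb (hge 0) heb).2 (by omega)
  have T : COdd.Setup m S B q a g :=
    { one_le := hq
      subset := hB.1
      diag := fun s hsS => by
        have := hm ⟨s, hsS⟩ ⟨s, hsS⟩
        rw [← this]
        exact cm.diagonal _
      symm := fun s hsS t htS => by
        have h1 := hm ⟨s, hsS⟩ ⟨t, htS⟩
        have h2 := hm ⟨t, htS⟩ ⟨s, hsS⟩
        rw [← h1, ← h2]
        exact cm.symmetric _ _
      off := fun s hsS t htS hst => by
        have h1 := hm ⟨s, hsS⟩ ⟨t, htS⟩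
        rw [← h1]
        exact cm.off_diagonal _ _ (fun h => hst (congrArg Subtype.val h))
      mem_a := ha
      mem_g := hgB
      ne_a := fun j h => by
        have := (heq _ _ _ _ (hgB j) ha (hge j) hea).1 h
        omega
      exists_g := fun x hx hxa => by
        have h1 := (heq _ _ _ _ hx ha rfl hea).not.1 hxa
        have h2 := (e ⟨x, hx⟩).2
        refine ⟨2 * q - 1 - e ⟨x, hx⟩, by omega, ?_⟩
        exact (heq _ _ _ _ hx (hgB _) rfl (hge _)).2 (by omega)
      inj_g := fun i hi j hj h => by
        have := (heq _ _ _ _ (hgB i) (hgB j) (hge i) (hge j)).1 h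
        omega
      m_succ := fun j hj => by
        rw [hmB _ _ (hgB _) (hgB _)]
        simp only [cMat, Fin.ext_iff, hge]
        split_ifs <;> omega
      m_far := fun i j hij hj => by
        rw [hmB _ _ (hgB _) (hgB _)]
        simp only [cMat, Fin.ext_iff, hge]
        split_ifs <;> omega
      m_a_zero := by rw [hb0, hab]
      m_a_far := fun j h1 hj => by
        rw [hmB _ _ ha (hgB _)]
        simp only [cMat, Fin.ext_iff, hge, hea]
        split_ifs <;> omega
      cond := hcond }
  have hzc := T.longest_eq_center cs hs hm hz
  clear_value g
  subst hb0 hzc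
  refine ⟨T.newm, T.isCoxeterSystemOn cs hs hm, T.isBase cs hs hm hB.2.2.1,
    T.hasType cs hs hm e ?_, T.matches_new cs hs hm, fun t ht => T.newm_center_mem cs hs hm ht, ?_⟩
  · exact COdd.newM_eq_bMat hq e he (a := ⟨a, ha⟩) (b := ⟨g 0, hb⟩) hea heb
  · intro s hsS hsB t ht
    rw [T.newm_outside cs hs hm hsS hsB ht]
    exact ⟨Iff.rfl, hcond s hsS hsB a ha⟩
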